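/- (Curvature-dependent jump relation for the supported-plate representation, biharmonic part.) Let ν ∈ ℝ with ν ≠ 3 and ν ≠ −1, set α₁ = 2 − ν, α₂ = (ν−1)(7+ν)/(3−ν), α₃ = (1−ν)(3+ν)/(1+ν), and c₀ = (ν−1)(ν+3)(2ν−1)/(2(3−ν)). Let σ : ℝ → ℝ be infinitely differentiable with σ(s+L) = σ(s) for all s, and fix t ∈ ℝ. Define the kernel K(x, γ(s)) = G^B_{n_x n_x n_y n_y n_y} + ν G^B_{τ_x τ_x n_y n_y n_y} + α₁ G^B_{n_x n_x n_y τ_y τ_y} + ν α₁ G^B_{τ_x τ_x n_y τ_y τ_y} + α₂ κ(s) G^B_{n_x n_x n_y n_y} + ν α₂ κ(s) G^B_{τ_x τ_x n_y n_y} + α₃ κ′(s) G^B_{n_x n_x τ_y} + ν α₃ κ′(s) G^B_{τ_x τ_x τ_y}, all evaluated at (x, γ(s)), with x-derivatives in the directions n(t), τ(t) and y-derivatives in the directions n(s), τ(s). Then there is h₀ > 0 such that for 0 < |h| < h₀ the point γ(t) + h·n(t) does not lie on the curve, the function s ↦ K(γ(t), γ(s))·σ(s) is bounded on [0, L] with Lebesgue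 integral I := ∫₀^L K(γ(t), γ(s))σ(s) ds, and lim_{h→0⁺} ∫₀^L K(γ(t)+h·n(t), γ(s))σ(s) ds = c₀·κ(t)²·σ(t) + I, while lim_{h→0⁻} ∫₀^L K(γ(t)+h·n(t), γ(s))σ(s) ds = −c₀·κ(t)²·σ(t) + I. -/

import Mathlib

open Real Filter Topology MeasureTheory

noncomputable section

/-- Euclidean dot product on `ℝ × ℝ`. -/
def dot2 (v w : ℝ × ℝ) : ℝ := v.1 * w.1 + v.2 * w.2

/-- Unit tangent vector `τ(s) = γ′(s)`. -/
def tang (γ : ℝ → ℝ × ℝ) (s : ℝ) : ℝ × ℝ := deriv γ s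

/-- Unit normal vector `n(s) = (τ₂(s), −τ₁(s))`. -/
def nor (γ : ℝ → ℝ × ℝ) (s : ℝ) : ℝ × ℝ := ((deriv γ s).2, -(deriv γ s).1)

/-- Signed curvature `κ(s) = −γ″(s)·n(s)`. -/
def curv (γ : ℝ → ℝ × ℝ) (s : ℝ) : ℝ := -(dot2 (deriv (deriv γ) s) (nor γ s))

/-- The biharmonic Green's function `G^B(x,y) = (1/(8π))‖x−y‖² log‖x−y‖`. -/
def GB (x y : ℝ × ℝ) : ℝ :=
  1 / (8 * π) * dot2 (x - y) (x - y) * Real.log (Real.sqrt (dot2 (x - y) (x - y)))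

/-- Directional derivative in the first argument, in the direction `v`. -/
def ddx (v : ℝ × ℝ) (f : ℝ × ℝ → ℝ × ℝ → ℝ) (x y : ℝ × ℝ) : ℝ :=
  deriv (fun e : ℝ => f (x + e • v) y) 0

/-- Directional derivative in the second argument, in the direction `v`. -/
def ddy (v : ℝ × ℝ) (f : ℝ × ℝ → ℝ × ℝ → ℝ) (x y : ℝ × ℝ) : ℝ :=
  deriv (fun e : ℝ => f x (y + e • v)) 0

/-- The supported-plate kernel
`K = G^B_{n_x n_x n_y n_y n_y} + ν G^B_{τ_x τ_x n_y n_y n_y} + α₁ G^B_{n_x n_x n_y τ_y τ_y}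
 + ν α₁ G^B_{τ_x τ_x n_y τ_y τ_y} + α₂ κ(s) G^B_{n_x n_x n_y n_y} + ν α₂ κ(s) G^B_{τ_x τ_x n_y n_y}
 + α₃ κ′(s) G^B_{n_x n_x τ_y} + ν α₃ κ′(s) G^B_{τ_x τ_x τ_y}`
evaluated at `(x, γ(s))`, with `x`-derivatives in the directions `n(t)`, `τ(t)` and
`y`-derivatives in the directions `n(s)`, `τ(s)`. -/
def suppKer (γ : ℝ → ℝ × ℝ) (ν α₁ α₂ α₃ : ℝ) (t : ℝ) (x : ℝ × ℝ) (s : ℝ) : ℝ :=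
  ddx (nor γ t) (ddx (nor γ t) (ddy (nor γ s) (ddy (nor γ s) (ddy (nor γ s) GB)))) x (γ s)
    + ν * ddx (tang γ t) (ddx (tang γ t)
        (ddy (nor γ s) (ddy (nor γ s) (ddy (nor γ s) GB)))) x (γ s)
    + α₁ * ddx (nor γ t) (ddx (nor γ t)
        (ddy (nor γ s) (ddy (tang γ s) (ddy (tang γ s) GB)))) x (γ s)
    + ν * α₁ * ddx (tang γ t) (ddx (tang γ t)
        (ddy (nor γ s) (ddy (tang γ s) (ddy (tang γ s) GB)))) x (γ s)
    + α₂ * curv γ s * ddx (nor γ t) (ddx (nor γ t)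
        (ddy (nor γ s) (ddy (nor γ s) GB))) x (γ s)
    + ν * α₂ * curv γ s * ddx (tang γ t) (ddx (tang γ t)
        (ddy (nor γ s) (ddy (nor γ s) GB))) x (γ s)
    + α₃ * deriv (curv γ) s * ddx (nor γ t) (ddx (nor γ t) (ddy (tang γ s) GB)) x (γ s)
    + ν * α₃ * deriv (curv γ) s * ddx (tang γ t) (ddx (tang γ t) (ddy (tang γ s) GB)) x (γ s)

open ComplexConjugate in
/-- building block of the higher derivatives of the Green's function -/
def WW (P S : ℂ) (k : ℕ) (z : ℂ) : ℝ := (P * conj z / z ^ (k + 1) + S / z ^ k).re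

def cx (p : ℝ × ℝ) : ℂ := ⟨p.1, p.2⟩

lemma cx_ne {x y : ℝ × ℝ} (h : x ≠ y) : cx (x - y) ≠ 0 := by
  intro h0
  apply h
  have h1 := congrArg Complex.re h0
  have h2 := congrArg Complex.im h0
  simp [cx] at h1 h2
  ext <;> linarith

def KRep (f : ℝ × ℝ → ℝ × ℝ → ℝ) (F : ℂ → ℝ) : Prop := ∀ x y, x ≠ y → f x y = F (cx (x - y))

def LD (F F' : ℂ → ℝ) (v : ℂ) : Prop :=
  ∀ z : ℂ, z ≠ 0 → HasDerivAt (fun e : ℝ => F (z + e * v)) (F' z) 0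

lemma KRep.ddx {f F F'} (h : KRep f F) (v : ℝ × ℝ) (hF : LD F F' (cx v)) : KRep (ddx v f) F' := by
  intro x y hxy
  unfold _root_.ddx
  have hd := hF _ (cx_ne hxy)
  have : (fun e : ℝ => f (x + e • v) y) =ᶠ[𝓝 0] fun e : ℝ => F (cx (x - y) + e * cx v) := by
    have hc : ContinuousAt (fun e : ℝ => x + e • v) 0 := by fun_prop
    have hne : ∀ᶠ e : ℝ in 𝓝 0, x + e • v ≠ y := by
      apply hc.eventually_ne; simpa using hxy
    filter_upwards [hne] with e he
    rw [h _ _ he]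
    congr 1
    apply Complex.ext <;> simp [cx] <;> ring
  rw [this.deriv_eq, hd.deriv]

lemma KRep.ddy {f F F'} (h : KRep f F) (v : ℝ × ℝ) (hF : LD F F' (-cx v)) : KRep (ddy v f) F' := by
  intro x y hxy
  unfold _root_.ddy
  have hd := hF _ (cx_ne hxy)
  have : (fun e : ℝ => f x (y + e • v)) =ᶠ[𝓝 0] fun e : ℝ => F (cx (x - y) + e * (-cx v)) := by
    have hc : ContinuousAt (fun e : ℝ => y + e • v) 0 := by fun_prop
    have hne : ∀ᶠ e : ℝ in 𝓝 0, y + e • v ≠ x := by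
      apply hc.eventually_ne; simpa using hxy.symm
    filter_upwards [hne] with e he
    rw [h _ _ he.symm]
    congr 1
    apply Complex.ext <;> simp [cx] <;> ring
  rw [this.deriv_eq, hd.deriv]

section
open ComplexConjugate

lemma line_deriv (z v : ℂ) : HasDerivAt (fun e : ℝ => z + e * v) v 0 := by
  have h : HasDerivAt (fun e : ℝ => (e : ℂ)) 1 (0 : ℝ) := Complex.ofRealCLM.hasDerivAt
  simpa using (h.mul_const v).const_add z

lemma hasDerivAt_conj' {f : ℝ → ℂ} {f' : ℂ} {s : ℝ} (h : HasDerivAt f f' s) :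
    HasDerivAt (fun s => conj (f s)) (conj f') s := by
  exact (Complex.conjCLE.toContinuousLinearMap.hasFDerivAt (x := f s)).comp_hasDerivAt s h

lemma hasDerivAt_re' {f : ℝ → ℂ} {f' : ℂ} {s : ℝ} (h : HasDerivAt f f' s) :
    HasDerivAt (fun s => (f s).re) f'.re s := by
  exact (Complex.reCLM.hasFDerivAt (x := f s)).comp_hasDerivAt s h

lemma LD_WW (P S : ℂ) (k : ℕ) (v : ℂ) :
    LD (WW P S k) (WW (-((k + 1 : ℕ) : ℂ) * P * v) (P * conj v - k * S * v) (k + 1)) v := by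
  intro z hz
  unfold WW
  have hl := line_deriv z v
  have hz' : z + ((0 : ℝ) : ℂ) * v ≠ 0 := by simpa using hz
  have h1 := (((hasDerivAt_conj' hl).const_mul P).div (hl.pow (k + 1)) (pow_ne_zero _ hz'))
  have h2 := ((hasDerivAt_const (0 : ℝ) S).div (hl.pow k) (pow_ne_zero _ hz'))
  have h3 := hasDerivAt_re' (h1.add h2)
  refine h3.congr_deriv ?_
  congr 1
  simp only [Complex.ofReal_zero, zero_mul, add_zero, Pi.pow_apply]
  rcases k with _ | k
  · field_simp
    push_cast
    ring
  · simp only [Nat.add_sub_cancel]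
    field_simp
    push_cast
    ring

lemma normSq_line (z v : ℂ) : HasDerivAt (fun e : ℝ => Complex.normSq (z + e * v))
    (2 * (z * conj v).re) 0 := by
  have hl := line_deriv z v
  have h := hasDerivAt_re' (hl.mul (hasDerivAt_conj' hl))
  have e : (fun e : ℝ => Complex.normSq (z + e * v)) =
      fun e : ℝ => ((z + e * v) * conj (z + e * v)).re := by
    ext e; rw [Complex.mul_conj, Complex.ofReal_re]
  rw [e]
  refine h.congr_deriv ?_
  simp
  ring

lemma log_line (z v : ℂ) (hz : z ≠ 0) :
    HasDerivAt (fun e : ℝ => Real.log (Complex.normSq (z + e * v)))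
    (2 * (v / z).re) 0 := by
  have h := (normSq_line z v).log (by simpa using hz)
  refine h.congr_deriv ?_
  simp [Complex.div_re]
  ring

def G0 (z : ℂ) : ℝ := 1 / (16 * π) * (Complex.normSq z * Real.log (Complex.normSq z))
def G1 (v z : ℂ) : ℝ :=
  1 / (8 * π) * ((z * conj v).re * Real.log (Complex.normSq z) + (z * conj v).re)
def G2 (v w z : ℂ) : ℝ :=
  1 / (8 * π) * ((w * conj v).re * Real.log (Complex.normSq z) + WW (v * w) 0 0 z
    + 2 * (w * conj v).re)
def G3 (P S : ℂ) (k : ℕ) (z : ℂ) : ℝ := 1 / (8 * π) * WW P S k z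

lemma LD_G0 (v : ℂ) : LD G0 (G1 v) v := by
  intro z hz
  have h := (((normSq_line z v).mul (log_line z v hz)).const_mul (1 / (16 * π)))
  refine h.congr_deriv ?_
  have : Complex.normSq z ≠ 0 := by simpa using hz
  have e : (v / z).re * Complex.normSq z = (z * conj v).re := by
    simp [Complex.div_re]
    field_simp
  simp only [G1, Complex.ofReal_zero, zero_mul, add_zero]
  rw [← e]; field_simp; ring

lemma re_line (z v w : ℂ) : HasDerivAt (fun e : ℝ => ((z + e * w) * conj v).re)
    ((w * conj v).re) 0 := hasDerivAt_re' ((line_deriv z w).mul_const _)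

lemma LD_G1 (v w : ℂ) : LD (G1 v) (G2 v w) w := by
  intro z hz
  have h := ((((re_line z v w).mul (log_line z w hz)).add (re_line z v w)).const_mul (1 / (8 * π)))
  refine h.congr_deriv ?_
  have h0 : Complex.normSq z ≠ 0 := by simpa using hz
  have e : 2 * (w / z).re * (z * conj v).re = WW (v * w) 0 0 z + (w * conj v).re := by
    rw [Complex.normSq_apply, ← pow_two, ← pow_two] at h0
    simp [Complex.div_re, WW, Complex.normSq_apply, ← pow_two]
    field_simp
    ring
  simp only [G2, Complex.ofReal_zero, zero_mul, add_zero]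
  linear_combination (1 / (8 * π)) * e

lemma LD_G2 (v w u : ℂ) : LD (G2 v w)
    (G3 (-(v * w * u)) (v * w * conj u + v * u * conj w + w * u * conj v) 1) u := by
  intro z hz
  have h := (((((log_line z u hz).const_mul (w * conj v).re).add
    (LD_WW (v * w) 0 0 u z hz)).add_const (2 * (w * conj v).re)).const_mul (1 / (8 * π)))
  refine h.congr_deriv ?_
  simp only [G3, WW]
  congr 1
  have e : (w * conj v).re * (2 * (u / z).re) = ((v * u * conj w + w * u * conj v) / z).re := by
    rw [show v * u * conj w + w * u * conj v = ((2 * (w * conj v).re : ℝ) : ℂ) * u by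
      apply Complex.ext <;> simp <;> ring]
    rw [mul_div_assoc, Complex.re_ofReal_mul]; ring
  rw [e, ← Complex.add_re]
  congr 1
  push_cast
  field_simp
  ring

lemma LD_G3 (P S : ℂ) (k : ℕ) (v : ℂ) :
    LD (G3 P S k) (G3 (-((k + 1 : ℕ) : ℂ) * P * v) (P * conj v - k * S * v) (k + 1)) v := by
  intro z hz
  exact (LD_WW P S k v z hz).const_mul _

lemma KRep_GB : KRep GB G0 := by
  intro x y _
  have e : dot2 (x - y) (x - y) = Complex.normSq (cx (x - y)) := by
    simp [dot2, cx, Complex.normSq_apply]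
  simp only [GB, G0]
  rw [e, Real.log_sqrt (Complex.normSq_nonneg _)]
  field_simp; ring

lemma ker5 (a b c p q x y : ℝ × ℝ) (hxy : x ≠ y) :
    ddx q (ddx p (ddy c (ddy b (ddy a GB)))) x y = (-(1 / (8 * π)) *
      WW (-6 * (cx a * cx b * cx c * cx p * cx q))
        (2 * (cx a * cx b * cx c * cx p * conj (cx q) + cx a * cx b * cx c * conj (cx p) * (cx q)
         + cx a * cx b * conj (cx c) * (cx p) * (cx q) + cx a * conj (cx b) * (cx c) * (cx p) * (cx q)
         + conj (cx a) * (cx b) * (cx c) * (cx p) * (cx q))) 3 (cx (x - y))) := by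
  have h1 := KRep_GB.ddy a (LD_G0 _)
  have h2 := h1.ddy b (LD_G1 _ _)
  have h3 := h2.ddy c (LD_G2 _ _ _)
  have h4 := h3.ddx p (LD_G3 _ _ _ _)
  have h5 := h4.ddx q (LD_G3 _ _ _ _)
  rw [h5 x y hxy, G3, neg_mul_comm (1 / (8 * π))]
  refine congrArg (fun r : ℝ => 1 / (8 * π) * r) ?_
  simp only [WW, ← Complex.neg_re]
  congr 1
  push_cast
  simp only [map_neg]
  ring

lemma ker4 (a b p q x y : ℝ × ℝ) (hxy : x ≠ y) :
    ddx q (ddx p (ddy b (ddy a GB))) x y = (1 / (8 * π)) *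
      WW (2 * (cx a * cx b * cx p * cx q))
        (-(cx a * cx b * cx p * conj (cx q) + cx a * cx b * conj (cx p) * (cx q)
         + cx a * conj (cx b) * (cx p) * (cx q)
         + conj (cx a) * (cx b) * (cx p) * (cx q))) 2 (cx (x - y)) := by
  have h1 := KRep_GB.ddy a (LD_G0 _)
  have h2 := h1.ddy b (LD_G1 _ _)
  have h4 := h2.ddx p (LD_G2 _ _ _)
  have h5 := h4.ddx q (LD_G3 _ _ _ _)
  rw [h5 x y hxy, G3]
  congr 1
  simp only [WW]
  congr 1
  push_cast
  simp only [map_neg]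
  ring

lemma ker3 (a p q x y : ℝ × ℝ) (hxy : x ≠ y) :
    ddx q (ddx p (ddy a GB)) x y = -(1 / (8 * π)) *
      WW (-(cx a * cx p * cx q))
        (cx a * cx p * conj (cx q) + cx a * conj (cx p) * (cx q)
         + conj (cx a) * (cx p) * (cx q)) 1 (cx (x - y)) := by
  have h1 := KRep_GB.ddy a (LD_G0 _)
  have h4 := h1.ddx p (LD_G1 _ _)
  have h5 := h4.ddx q (LD_G2 _ _ _)
  rw [h5 x y hxy, G3, neg_mul_comm (1 / (8 * π))]
  refine congrArg (fun r : ℝ => 1 / (8 * π) * r) ?_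
  simp only [WW, ← Complex.neg_re]
  congr 1
  simp only [map_neg]
  ring

end

section
open ComplexConjugate

/-- complex kernel, so that `K = -(1/8π) Re QQ`. -/
def QQ (ν α₂ α₃ : ℝ) (u : ℂ) (κ κ1 : ℝ) (z c : ℂ) : ℂ :=
  Complex.I * (1 - ν) * (-6 * (1 - ν) * u ^ 3 * c / z ^ 4
      + 2 * ((5 - ν) * u - 2 * (1 + ν) * u ^ 3) / z ^ 3)
    - α₂ * κ * (2 * (1 - ν) * u ^ 2 * c / z ^ 3 + (2 * (1 - ν) + 2 * (1 + ν) * u ^ 2) / z ^ 2)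
    + α₃ * κ1 * ((1 - ν) * u * c / z ^ 2 + (-(1 - ν) * conj u + 2 * (1 + ν) * u) / z)

lemma smul_WW (r : ℝ) (P S : ℂ) (k : ℕ) (z : ℂ) :
    r * WW P S k z = ((r : ℂ) * (P * conj z / z ^ (k + 1) + S / z ^ k)).re := by
  rw [Complex.re_ofReal_mul, WW]

lemma cx_nor (γ : ℝ → ℝ × ℝ) (s : ℝ) : cx (nor γ s) = -Complex.I * cx (deriv γ s) := by
  apply Complex.ext <;> simp [cx, nor]

lemma cx_mul_conj (v : ℝ × ℝ) (h : dot2 v v = 1) : cx v * conj (cx v) = 1 := by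
  rw [Complex.mul_conj]
  simp only [dot2] at h
  simp [cx, Complex.normSq_apply, h]

lemma alg_ker (ν α₂ α₃ κ κ1 : ℝ) (T τ w : ℂ) (hT : T * conj T = 1) (hτ : τ * conj τ = 1)
    (hw : w ≠ 0) :
    WW (-6 * (-Complex.I * τ * (-Complex.I * τ) * (-Complex.I * τ) * (-Complex.I * T) * (-Complex.I * T)))
      (2 * ((-Complex.I * τ) * (-Complex.I * τ) * (-Complex.I * τ) * (-Complex.I * T) * conj (-Complex.I * T)
       + (-Complex.I * τ) * (-Complex.I * τ) * (-Complex.I * τ) * conj (-Complex.I * T) * (-Complex.I * T)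
         + (-Complex.I * τ) * (-Complex.I * τ) * conj (-Complex.I * τ) * (-Complex.I * T) * (-Complex.I * T)
         + (-Complex.I * τ) * conj (-Complex.I * τ) * (-Complex.I * τ) * (-Complex.I * T) * (-Complex.I * T)
         + conj (-Complex.I * τ) * (-Complex.I * τ) * (-Complex.I * τ) * (-Complex.I * T) * (-Complex.I * T))) 3 w
    + ν * WW (-6 * (-Complex.I * τ * (-Complex.I * τ) * (-Complex.I * τ) * (T) * (T)))
      (2 * ((-Complex.I * τ) * (-Complex.I * τ) * (-Complex.I * τ) * (T) * conj (T)
       + (-Complex.I * τ) * (-Complex.I * τ) * (-Complex.I * τ) * conj (T) * (T)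
         + (-Complex.I * τ) * (-Complex.I * τ) * conj (-Complex.I * τ) * (T) * (T)
         + (-Complex.I * τ) * conj (-Complex.I * τ) * (-Complex.I * τ) * (T) * (T)
         + conj (-Complex.I * τ) * (-Complex.I * τ) * (-Complex.I * τ) * (T) * (T))) 3 w
    + (2 - ν) * WW (-6 * (τ * τ * (-Complex.I * τ) * (-Complex.I * T) * (-Complex.I * T)))
      (2 * ((τ) * (τ) * (-Complex.I * τ) * (-Complex.I * T) * conj (-Complex.I * T)
       + (τ) * (τ) * (-Complex.I * τ) * conj (-Complex.I * T) * (-Complex.I * T)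
         + (τ) * (τ) * conj (-Complex.I * τ) * (-Complex.I * T) * (-Complex.I * T)
         + (τ) * conj (τ) * (-Complex.I * τ) * (-Complex.I * T) * (-Complex.I * T)
         + conj (τ) * (τ) * (-Complex.I * τ) * (-Complex.I * T) * (-Complex.I * T))) 3 w
    + ν * (2 - ν) * WW (-6 * (τ * τ * (-Complex.I * τ) * (T) * (T)))
      (2 * ((τ) * (τ) * (-Complex.I * τ) * (T) * conj (T)
       + (τ) * (τ) * (-Complex.I * τ) * conj (T) * (T)
         + (τ) * (τ) * conj (-Complex.I * τ) * (T) * (T)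
         + (τ) * conj (τ) * (-Complex.I * τ) * (T) * (T)
         + conj (τ) * (τ) * (-Complex.I * τ) * (T) * (T))) 3 w
    - α₂ * κ * WW (2 * (-Complex.I * τ * (-Complex.I * τ) * (-Complex.I * T) * (-Complex.I * T)))
      (-((-Complex.I * τ) * (-Complex.I * τ) * (-Complex.I * T) * conj (-Complex.I * T)
       + (-Complex.I * τ) * (-Complex.I * τ) * conj (-Complex.I * T) * (-Complex.I * T)
         + (-Complex.I * τ) * conj (-Complex.I * τ) * (-Complex.I * T) * (-Complex.I * T)
         + conj (-Complex.I * τ) * (-Complex.I * τ) * (-Complex.I * T) * (-Complex.I * T))) 2 w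
    - ν * α₂ * κ * WW (2 * (-Complex.I * τ * (-Complex.I * τ) * (T) * (T)))
      (-((-Complex.I * τ) * (-Complex.I * τ) * (T) * conj (T)
       + (-Complex.I * τ) * (-Complex.I * τ) * conj (T) * (T)
         + (-Complex.I * τ) * conj (-Complex.I * τ) * (T) * (T)
         + conj (-Complex.I * τ) * (-Complex.I * τ) * (T) * (T))) 2 w
    + α₃ * κ1 * WW (-(τ * (-Complex.I * T) * (-Complex.I * T)))
      (τ * (-Complex.I * T) * conj (-Complex.I * T) + τ * conj (-Complex.I * T) * (-Complex.I * T)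
        + conj τ * (-Complex.I * T) * (-Complex.I * T)) 1 w
    + ν * α₃ * κ1 * WW (-(τ * (T) * (T)))
      (τ * (T) * conj (T) + τ * conj (T) * (T)
        + conj τ * (T) * (T)) 1 w
    = (QQ ν α₂ α₃ (conj T * τ) κ κ1 (conj T * w) (conj (conj T * w))).re := by
  have hT0 : T ≠ 0 := by rintro rfl; simp at hT
  have hτ0 : τ ≠ 0 := by rintro rfl; simp at hτ
  have eT : conj T = T⁻¹ := eq_inv_of_mul_eq_one_right hT
  have eτ : conj τ = τ⁻¹ := eq_inv_of_mul_eq_one_right hτ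
  have h1 : (2 - ν : ℝ) = ((2 - ν : ℝ)) := rfl
  rw [← one_mul (WW (-6 * (-Complex.I * τ * (-Complex.I * τ) * (-Complex.I * τ) * (-Complex.I * T) * (-Complex.I * T))) _ _ _)]
  simp only [smul_WW, ← Complex.add_re, ← Complex.sub_re]
  congr 1
  simp only [QQ, map_mul, map_neg, Complex.conj_I, Complex.conj_conj, eT, eτ, map_inv₀]
  push_cast
  have hI2 : Complex.I ^ 2 = -1 := Complex.I_sq
  have hI3 : Complex.I ^ 3 = -Complex.I := by rw [pow_succ, hI2]; ring
  have hI4 : Complex.I ^ 4 = 1 := by rw [show (4 : ℕ) = 2 * 2 from rfl, pow_mul, hI2]; ring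
  have hI5 : Complex.I ^ 5 = Complex.I := by rw [pow_succ, hI4]; ring
  generalize conj w = wb
  field_simp
  ring_nf
  simp only [hI2, hI3, hI4, hI5]
  ring

lemma suppKer_eq (γ : ℝ → ℝ × ℝ) (ν α₂ α₃ t : ℝ) (x : ℝ × ℝ) (s : ℝ)
    (harc : ∀ s, dot2 (deriv γ s) (deriv γ s) = 1) (hx : x ≠ γ s) :
    suppKer γ ν (2 - ν) α₂ α₃ t x s = -(1 / (8 * π)) *
      (QQ ν α₂ α₃ (conj (cx (deriv γ t)) * cx (deriv γ s)) (curv γ s) (deriv (curv γ) s)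
        (conj (cx (deriv γ t)) * cx (x - γ s)) (conj (conj (cx (deriv γ t)) * cx (x - γ s)))).re := by
  rw [← alg_ker ν α₂ α₃ _ _ _ _ _ (cx_mul_conj _ (harc t)) (cx_mul_conj _ (harc s)) (cx_ne hx)]
  unfold suppKer
  simp only [ker5 _ _ _ _ _ _ _ hx, ker4 _ _ _ _ _ _ hx, ker3 _ _ _ _ _ hx, cx_nor]
  simp only [tang]
  ring
end

section
open ComplexConjugate

/-- Rotated and centred data of the curve and of the density. -/
structure Dt where
  l : ℝ
  ν : ℝ
  α₂ : ℝ
  α₃ : ℝ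
  g : ℝ → ℂ
  u : ℝ → ℂ
  κ : ℝ → ℝ
  κ1 : ℝ → ℝ
  κ2 : ℝ → ℝ
  σ : ℝ → ℝ
  σ1 : ℝ → ℝ
  σ2 : ℝ → ℝ
  σ3 : ℝ → ℝ
  hl : 0 < l
  hα₂ : α₂ * (3 - ν) = (ν - 1) * (7 + ν)
  hα₃ : α₃ * (1 + ν) = (1 - ν) * (3 + ν)
  hg : ∀ s, HasDerivAt g (u s) s
  hu : ∀ s, HasDerivAt u (Complex.I * κ s * u s) s
  hκ : ∀ s, HasDerivAt κ (κ1 s) s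
  hκ1 : ∀ s, HasDerivAt κ1 (κ2 s) s
  hκ2 : Continuous κ2
  hσ : ∀ s, HasDerivAt σ (σ1 s) s
  hσ1 : ∀ s, HasDerivAt σ1 (σ2 s) s
  hσ2 : ∀ s, HasDerivAt σ2 (σ3 s) s
  hσ3 : Continuous σ3
  g0 : g 0 = 0
  u0 : u 0 = 1
  hn : ∀ s, u s * conj (u s) = 1
  nz : ∀ s ∈ Set.Icc (-l) l, s ≠ 0 → g s ≠ 0
  pg : g (-l) = g l
  pu : u (-l) = u l
  pκ : κ (-l) = κ l
  pκ1 : κ1 (-l) = κ1 l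
  pσ : σ (-l) = σ l
  pσ1 : σ1 (-l) = σ1 l
  pσ2 : σ2 (-l) = σ2 l

namespace Dt
variable (D : Dt)

def z (h s : ℝ) : ℂ := -Complex.I * h - D.g s
def c (h s : ℝ) : ℂ := Complex.I * h - conj (D.g s)
def Q (h s : ℝ) : ℂ := QQ D.ν D.α₂ D.α₃ (D.u s) (D.κ s) (D.κ1 s) (D.z h s) (D.c h s) * D.σ s

def X (h s : ℝ) : ℂ :=
  Complex.I * (1 - D.ν) * (2 * (1 - D.ν) * (2 * Complex.I * D.κ s * D.σ s + D.σ1 s) * D.u s * D.c h s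
    + 8 * D.σ s - 4 * (1 + D.ν) * D.u s ^ 2 * D.σ s)
  - 2 * (1 - D.ν) * D.α₂ * D.κ s * D.σ s * D.u s * D.c h s

def E (s : ℝ) : ℂ :=
  -Complex.I * (1 - D.ν) ^ 2 * ((2 * Complex.I * (D.κ1 s * D.σ s + D.κ s * D.σ1 s) + D.σ2 s)
    + Complex.I * D.κ s * (2 * Complex.I * D.κ s * D.σ s + D.σ1 s))
  + (1 - D.ν) * D.α₂ * ((D.κ1 s * D.σ s + D.κ s * D.σ1 s) + Complex.I * D.κ s ^ 2 * D.σ s)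
  + (1 - D.ν) * D.α₃ * D.κ1 s * D.σ s

def EP (s : ℝ) : ℂ :=
  -Complex.I * (1 - D.ν) ^ 2 * ((2 * Complex.I * (D.κ2 s * D.σ s + 2 * D.κ1 s * D.σ1 s + D.κ s * D.σ2 s)
      + D.σ3 s)
    + Complex.I * D.κ1 s * (2 * Complex.I * D.κ s * D.σ s + D.σ1 s)
    + Complex.I * D.κ s * (2 * Complex.I * (D.κ1 s * D.σ s + D.κ s * D.σ1 s) + D.σ2 s))
  + (1 - D.ν) * D.α₂ * ((D.κ2 s * D.σ s + 2 * D.κ1 s * D.σ1 s + D.κ s * D.σ2 s)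
      + Complex.I * (2 * D.κ s * D.κ1 s * D.σ s + D.κ s ^ 2 * D.σ1 s))
  + (1 - D.ν) * D.α₃ * (D.κ2 s * D.σ s + D.κ1 s * D.σ1 s)

def M (s : ℝ) : ℂ :=
  Complex.I * (1 - D.ν) * (((1 - D.ν) * conj (D.u s) + 2 * (1 + D.ν) * D.u s)
      * (2 * Complex.I * D.κ s * D.σ s + D.σ1 s) - 4 * D.σ1 s * conj (D.u s))
  - D.α₂ * D.κ s * D.σ s * (3 * (1 - D.ν) * conj (D.u s) + 2 * (1 + D.ν) * D.u s)

def N (s : ℝ) : ℂ :=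
  Complex.I * (1 - D.ν) * ((-(1 - D.ν) * Complex.I * D.κ s * conj (D.u s)
        + 2 * (1 + D.ν) * Complex.I * D.κ s * D.u s)
      * (2 * Complex.I * D.κ s * D.σ s + D.σ1 s)
      + ((1 - D.ν) * conj (D.u s) + 2 * (1 + D.ν) * D.u s)
      * (2 * Complex.I * (D.κ1 s * D.σ s + D.κ s * D.σ1 s) + D.σ2 s)
      - 4 * D.σ2 s * conj (D.u s) + 4 * Complex.I * D.κ s * D.σ1 s * conj (D.u s))
  - D.α₂ * (D.κ1 s * D.σ s + D.κ s * D.σ1 s)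
      * (3 * (1 - D.ν) * conj (D.u s) + 2 * (1 + D.ν) * D.u s)
  - D.α₂ * D.κ s * D.σ s * (-3 * (1 - D.ν) * Complex.I * D.κ s * conj (D.u s)
      + 2 * (1 + D.ν) * Complex.I * D.κ s * D.u s)

def Φ (h s : ℝ) : ℂ :=
  -2 * Complex.I * (1 - D.ν) ^ 2 * D.u s ^ 2 * D.σ s * D.c h s / D.z h s ^ 3
  + D.X h s / (2 * D.z h s ^ 2) + (D.E s * D.c h s + D.M s) / D.z h s

def A (s : ℝ) : ℂ := D.E s * conj (D.u s) - D.N s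
  + D.α₃ * D.κ1 s * D.σ s * (-(1 - D.ν) * conj (D.u s) + 2 * (1 + D.ν) * D.u s)

def R (h s : ℝ) : ℂ := (D.A s - D.EP s * D.c h s) / D.z h s

lemma hz (h s : ℝ) : HasDerivAt (D.z h) (-D.u s) s := by
  exact (D.hg s).const_sub (-Complex.I * h)

lemma hc (h s : ℝ) : HasDerivAt (D.c h) (-conj (D.u s)) s := by
  exact (hasDerivAt_conj' (D.hg s)).const_sub (Complex.I * h)

lemma hub (s : ℝ) : HasDerivAt (fun s => conj (D.u s)) (-(Complex.I * D.κ s * conj (D.u s))) s := by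
  have := hasDerivAt_conj' (D.hu s)
  refine this.congr_deriv ?_
  simp

lemma ofRe {f : ℝ → ℝ} {f' s : ℝ} (h : HasDerivAt f f' s) :
    HasDerivAt (fun s => (f s : ℂ)) (f' : ℂ) s := h.ofReal_comp

lemma hE (s : ℝ) : HasDerivAt D.E (D.EP s) s := by
  have k := ofRe (D.hκ s)
  have k1 := ofRe (D.hκ1 s)
  have q := ofRe (D.hσ s)
  have q1 := ofRe (D.hσ1 s)
  have q2 := ofRe (D.hσ2 s)
  have h1 := ((((((k1.mul q).add (k.mul q1)).const_mul (2 * Complex.I)).add q2).add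
    ((k.const_mul Complex.I).mul (((k.const_mul (2 * Complex.I)).mul q).add q1))).const_mul
      (-Complex.I * (1 - (D.ν : ℂ)) ^ 2))
  have h2 := ((((k1.mul q).add (k.mul q1)).add (((k.pow 2).const_mul Complex.I).mul q)).const_mul
      ((1 - (D.ν : ℂ)) * D.α₂))
  have h3 := (k1.const_mul ((1 - (D.ν : ℂ)) * D.α₃)).mul q
  refine ((h1.add h2).add h3).congr_deriv ?_
  simp only [EP, Pi.mul_apply, Pi.add_apply, Pi.pow_apply]
  push_cast
  ring

lemma hM (s : ℝ) : HasDerivAt D.M (D.N s) s := by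
  have k := ofRe (D.hκ s)
  have q := ofRe (D.hσ s)
  have q1 := ofRe (D.hσ1 s)
  have v := D.hub s
  have w := D.hu s
  have h1 := (((((v.const_mul (1 - (D.ν : ℂ))).add (w.const_mul (2 * (1 + (D.ν : ℂ))))).mul
    (((k.const_mul (2 * Complex.I)).mul q).add q1)).sub ((q1.const_mul 4).mul v)).const_mul
      (Complex.I * (1 - (D.ν : ℂ))))
  have h2 := ((k.const_mul (D.α₂ : ℂ)).mul q).mul ((v.const_mul (3 * (1 - (D.ν : ℂ)))).add
    (w.const_mul (2 * (1 + (D.ν : ℂ)))))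
  refine (h1.sub h2).congr_deriv ?_
  simp only [N, Pi.mul_apply, Pi.add_apply, Pi.pow_apply]
  ring

lemma hX (h s : ℝ) : HasDerivAt (D.X h) (Complex.I * (1 - D.ν) *
    (2 * (1 - D.ν) * (2 * Complex.I * (D.κ1 s * D.σ s + D.κ s * D.σ1 s) + D.σ2 s) * D.u s * D.c h s
    + 2 * (1 - D.ν) * (2 * Complex.I * D.κ s * D.σ s + D.σ1 s) * (Complex.I * D.κ s) * D.u s * D.c h s
    - 2 * (1 - D.ν) * (2 * Complex.I * D.κ s * D.σ s + D.σ1 s)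
    + 8 * D.σ1 s - 4 * (1 + D.ν) * D.u s ^ 2 * (2 * Complex.I * D.κ s * D.σ s + D.σ1 s))
  - 2 * (1 - D.ν) * D.α₂ * ((D.κ1 s * D.σ s + D.κ s * D.σ1 s) * D.u s * D.c h s
    + Complex.I * D.κ s ^ 2 * D.σ s * D.u s * D.c h s - D.κ s * D.σ s)) s := by
  have k := ofRe (D.hκ s)
  have q := ofRe (D.hσ s)
  have q1 := ofRe (D.hσ1 s)
  have w := D.hu s
  have c := D.hc h s
  have h1 := (((((((((k.const_mul (2 * Complex.I)).mul q).add q1).const_mul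
    (2 * (1 - (D.ν : ℂ)))).mul w).mul c).add (q.const_mul 8)).sub
    (((w.pow 2).const_mul (4 * (1 + (D.ν : ℂ)))).mul q)).const_mul (Complex.I * (1 - (D.ν : ℂ))))
  have h2 := ((((k.const_mul (2 * (1 - (D.ν : ℂ)) * D.α₂)).mul q).mul w).mul c)
  refine (h1.sub h2).congr_deriv ?_
  simp only [Pi.mul_apply, Pi.add_apply, Pi.pow_apply]
  have := D.hn s
  push_cast
  linear_combination (-Complex.I * (1 - (D.ν : ℂ)) * (2 * (1 - (D.ν : ℂ)) * (2 * Complex.I * D.κ s * D.σ s + D.σ1 s)) + 2 * (1 - (D.ν : ℂ)) * D.α₂ * D.κ s * D.σ s) * this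

lemma hΦ (h s : ℝ) (h0 : D.z h s ≠ 0) :
    HasDerivAt (D.Φ h) (D.Q h s - D.R h s) s := by
  have q := ofRe (D.hσ s)
  have w := D.hu s
  have c := D.hc h s
  have z := D.hz h s
  have h1 := ((((w.pow 2).const_mul (-2 * Complex.I * (1 - (D.ν : ℂ)) ^ 2)).mul q).mul c).div
    (z.pow 3) (pow_ne_zero 3 h0)
  have h2 := (D.hX h s).div ((z.pow 2).const_mul 2) (mul_ne_zero two_ne_zero (pow_ne_zero 2 h0))
  have h3 := (((D.hE s).mul c).add (D.hM s)).div z h0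
  refine ((h1.add h2).add h3).congr_deriv ?_
  have hu0 : D.u s ≠ 0 := by
    intro h0; have := D.hn s; rw [h0] at this; simp at this
  have hn : conj (D.u s) = (D.u s)⁻¹ := eq_inv_of_mul_eq_one_right (D.hn s)
  simp only [Q, R, QQ, A, Pi.mul_apply, Pi.add_apply, Pi.pow_apply, E, X, M, hn]
  generalize D.EP s = ep
  generalize D.N s = nn
  generalize D.z h s = z at *
  field_simp
  push_cast
  ring

end Dt
end

section
open ComplexConjugate Asymptotics

/-- second order jets at the origin -/
def J (f : ℝ → ℂ) (f0 f1 f2 : ℂ) : Prop :=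
  (fun s : ℝ => f s - (f0 + f1 * s + f2 * s ^ 2)) =O[𝓝[≠] 0] (fun s : ℝ => s ^ 3)

lemma tend_id : Tendsto (fun s : ℝ => (s : ℂ)) (𝓝[≠] 0) (𝓝 0) := by
  have : Continuous (fun s : ℝ => (s : ℂ)) := Complex.continuous_ofReal
  have h := this.tendsto 0
  rw [Complex.ofReal_zero] at h
  exact h.mono_left nhdsWithin_le_nhds

lemma poly_tend (f0 f1 f2 : ℂ) :
    Tendsto (fun s : ℝ => f0 + f1 * s + f2 * s ^ 2) (𝓝[≠] 0) (𝓝 f0) := by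
  have : Continuous (fun s : ℝ => f0 + f1 * (s : ℂ) + f2 * (s : ℂ) ^ 2) := by fun_prop
  have h := this.tendsto 0
  simp only [Complex.ofReal_zero, mul_zero, add_zero, ne_eq, OfNat.ofNat_ne_zero,
    not_false_eq_true, zero_pow] at h
  exact h.mono_left nhdsWithin_le_nhds

lemma pow3_tend : Tendsto (fun s : ℝ => s ^ 3) (𝓝[≠] 0) (𝓝 0) := by
  have : Continuous (fun s : ℝ => s ^ 3) := by fun_prop
  have h := this.tendsto 0
  simp only [ne_eq, OfNat.ofNat_ne_zero, not_false_eq_true, zero_pow] at h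
  exact h.mono_left nhdsWithin_le_nhds

namespace J
variable {f g : ℝ → ℂ} {f0 f1 f2 g0 g1 g2 : ℂ}

lemma tendsto (hf : J f f0 f1 f2) : Tendsto f (𝓝[≠] 0) (𝓝 f0) := by
  have h := (IsBigO.trans_tendsto hf pow3_tend).add (poly_tend f0 f1 f2)
  simpa using h

lemma bdd (hf : J f f0 f1 f2) : f =O[𝓝[≠] 0] (fun _ => (1 : ℝ)) := hf.tendsto.isBigO_one ℝ

lemma congr (hf : J f f0 f1 f2) (h : ∀ s, g s = f s) (h0 : g0 = f0) (h1 : g1 = f1) (h2 : g2 = f2) :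
    J g g0 g1 g2 := by
  have : g = f := funext h
  subst this h0 h1 h2
  exact hf

lemma const (w : ℂ) : J (fun _ => w) w 0 0 := by
  unfold J
  simp only [zero_mul, add_zero, sub_self]
  exact isBigO_zero _ _

lemma add (hf : J f f0 f1 f2) (hg : J g g0 g1 g2) :
    J (fun s => f s + g s) (f0 + g0) (f1 + g1) (f2 + g2) := by
  refine (IsBigO.add hf hg).congr_left ?_
  intro s; ring

lemma neg (hf : J f f0 f1 f2) : J (fun s => -f s) (-f0) (-f1) (-f2) := by
  refine (IsBigO.neg_left hf).congr_left ?_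
  intro s; ring

lemma sub (hf : J f f0 f1 f2) (hg : J g g0 g1 g2) :
    J (fun s => f s - g s) (f0 - g0) (f1 - g1) (f2 - g2) := by
  refine (IsBigO.sub hf hg).congr_left ?_
  intro s; ring

lemma cube_O (w : ℝ → ℂ) (a : ℂ) (hw : Tendsto w (𝓝[≠] 0) (𝓝 a)) :
    (fun s : ℝ => (s : ℂ) ^ 3 * w s) =O[𝓝[≠] 0] (fun s : ℝ => s ^ 3) := by
  have h1 : (fun s : ℝ => (s : ℂ) ^ 3) =O[𝓝[≠] 0] (fun s : ℝ => s ^ 3) := by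
    apply IsBigO.of_bound 1
    filter_upwards with s
    simp
  simpa using h1.mul (hw.isBigO_one ℝ)

lemma mul (hf : J f f0 f1 f2) (hg : J g g0 g1 g2) :
    J (fun s => f s * g s) (f0 * g0) (f0 * g1 + f1 * g0) (f0 * g2 + f1 * g1 + f2 * g0) := by
  have h1 := IsBigO.mul hf hg.bdd
  have h2 := IsBigO.mul ((poly_tend f0 f1 f2).isBigO_one ℝ) hg
  have h3 := cube_O _ _ (poly_tend (f1 * g2 + f2 * g1) (f2 * g2) 0)
  simp only [mul_one, one_mul] at h1 h2
  refine ((h1.add h2).add h3).congr_left ?_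
  intro s; ring

lemma inv (hf : J f 1 f1 f2) : J (fun s => (f s)⁻¹) 1 (-f1) (f1 ^ 2 - f2) := by
  have hp : J (fun s : ℝ => 1 + (-f1) * s + (f1 ^ 2 - f2) * s ^ 2) 1 (-f1) (f1 ^ 2 - f2) := by
    unfold J
    simp only [sub_self]
    exact isBigO_zero _ _
  have h1 := (J.const 1).sub (hf.mul hp)
  have h2 : J (fun s : ℝ => 1 - f s * (1 + (-f1) * s + (f1 ^ 2 - f2) * s ^ 2)) 0 0 0 := by
    refine h1.congr (fun s => rfl) ?_ ?_ ?_ <;> ring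
  have ht := hf.tendsto.inv₀ one_ne_zero
  have h3 := IsBigO.mul h2 (ht.isBigO_one ℝ)
  simp only [mul_one] at h3
  refine h3.congr' ?_ EventuallyEq.rfl
  filter_upwards [hf.tendsto.eventually_ne one_ne_zero] with s hs
  field_simp
  ring

lemma cnj (hf : J f f0 f1 f2) : J (fun s => conj (f s)) (conj f0) (conj f1) (conj f2) := by
  refine isBigO_norm_left.1 ((IsBigO.norm_left hf).congr_left ?_)
  intro s
  rw [← Complex.norm_conj]
  simp

/-- one order lower -/
lemma of_low {k : ℝ → ℂ} {k0 k1 : ℂ}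
    (h : (fun s : ℝ => k s - (k0 + k1 * s)) =O[𝓝 0] (fun s : ℝ => s ^ 2)) :
    J (fun s => s * k s) 0 k0 k1 := by
  have h1 : (fun s : ℝ => (s : ℂ)) =O[𝓝[≠] 0] (fun s : ℝ => s) := by
    apply IsBigO.of_bound 1
    filter_upwards with s
    simp
  refine (h1.mul (h.mono nhdsWithin_le_nhds)).congr (fun s => ?_) (fun s => ?_) <;> ring

lemma of_low2 {k : ℝ → ℂ} {k0 : ℂ}
    (h : (fun s : ℝ => k s - k0) =O[𝓝 0] (fun s : ℝ => s)) :
    J (fun s => s ^ 2 * k s) 0 0 k0 := by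
  have h1 : (fun s : ℝ => (s : ℂ) ^ 2) =O[𝓝[≠] 0] (fun s : ℝ => s ^ 2) := by
    apply IsBigO.of_bound 1
    filter_upwards with s
    simp
  refine (h1.mul (h.mono nhdsWithin_le_nhds)).congr (fun s => ?_) (fun s => ?_) <;> ring

end J

lemma integ {f f' : ℝ → ℂ} {n : ℕ} (hf : ∀ s, HasDerivAt f (f' s) s) (h0 : f 0 = 0)
    (hO : f' =O[𝓝 0] fun s : ℝ => s ^ n) : f =O[𝓝 0] fun s : ℝ => s ^ (n + 1) := by
  obtain ⟨C, hC0, hC⟩ := hO.exists_nonneg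
  replace hC := hC.bound
  obtain ⟨ε, hε, hb⟩ := Metric.eventually_nhds_iff.1 hC
  apply IsBigO.of_bound C
  rw [Metric.eventually_nhds_iff]
  refine ⟨ε, hε, fun s hs => ?_⟩
  have hs' : |s| < ε := by simpa using hs
  have key := (convex_uIcc (0 : ℝ) s).norm_image_sub_le_of_norm_hasDerivWithin_le
    (f := f) (f' := f') (C := C * |s| ^ n) (x := 0) (y := s)
    (fun x _ => (hf x).hasDerivWithinAt) (fun x hx => ?_) Set.left_mem_uIcc Set.right_mem_uIcc
  · rw [h0, sub_zero, sub_zero] at key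
    refine key.trans (le_of_eq ?_)
    simp only [Real.norm_eq_abs, abs_pow]
    ring
  · have hx' : |x| ≤ |s| := by
      have := Set.abs_sub_left_of_mem_uIcc hx
      simpa using this
    have h1 := hb (y := x) (by simpa using lt_of_le_of_lt hx' hs')
    refine h1.trans ?_
    simp only [Real.norm_eq_abs, abs_pow]
    gcongr

namespace Dt
variable (D : Dt)

lemma castO {f : ℝ → ℝ} {f' s : ℝ} (h : HasDerivAt f f' 0) :
    (fun s : ℝ => (f s : ℂ) - f 0) =O[𝓝 0] fun s : ℝ => s := by
  simpa using (ofRe h).isBigO_sub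

lemma lin_deriv (a b : ℂ) (s : ℝ) : HasDerivAt (fun s : ℝ => a + b * (s : ℂ)) b s := by
  have h : HasDerivAt (fun e : ℝ => (e : ℂ)) 1 s := Complex.ofRealCLM.hasDerivAt
  simpa using (h.const_mul b).const_add a

lemma quad_deriv (a b c : ℂ) (s : ℝ) :
    HasDerivAt (fun s : ℝ => a + b * (s : ℂ) + c / 2 * (s : ℂ) ^ 2) (b + c * s) s := by
  have h : HasDerivAt (fun e : ℝ => (e : ℂ)) 1 s := Complex.ofRealCLM.hasDerivAt
  refine ((lin_deriv a b s).add ((h.pow 2).const_mul (c / 2))).congr_deriv ?_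
  simp; ring

lemma cube_deriv (a b c d : ℂ) (s : ℝ) :
    HasDerivAt (fun s : ℝ => a + b * (s : ℂ) + c / 2 * (s : ℂ) ^ 2 + d / 3 * (s : ℂ) ^ 3)
      (b + c * s + d * s ^ 2) s := by
  have h : HasDerivAt (fun e : ℝ => (e : ℂ)) 1 s := Complex.ofRealCLM.hasDerivAt
  refine ((quad_deriv a b c s).add ((h.pow 3).const_mul (d / 3))).congr_deriv ?_
  simp; ring

/-- first order Taylor expansion -/
lemma taylor1 {f f1 : ℝ → ℝ} {f2 : ℝ} (h : ∀ s, HasDerivAt f (f1 s) s) (h1 : HasDerivAt f1 f2 0) :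
    (fun s : ℝ => (f s : ℂ) - (f 0 + f1 0 * s)) =O[𝓝 0] fun s : ℝ => s ^ 2 := by
  refine integ (n := 1) (f' := fun s => (f1 s : ℂ) - f1 0)
    (fun s => (ofRe (h s)).sub (lin_deriv _ _ s)) (by simp) ?_
  simpa using castO h1 (s := 0)

lemma taylor2 {f f1 f2 : ℝ → ℝ} {f3 : ℝ} (h : ∀ s, HasDerivAt f (f1 s) s)
    (h1 : ∀ s, HasDerivAt f1 (f2 s) s) (h2 : HasDerivAt f2 f3 0) :
    (fun s : ℝ => (f s : ℂ) - (f 0 + f1 0 * s + f2 0 / 2 * s ^ 2)) =O[𝓝 0] fun s : ℝ => s ^ 3 := by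
  refine integ (n := 2) (f' := fun s => (f1 s : ℂ) - (f1 0 + f2 0 * s))
    (fun s => (ofRe (h s)).sub (quad_deriv _ _ _ s)) (by simp) ?_
  exact taylor1 h1 h2

lemma jσ : J (fun s => D.σ s) (D.σ 0) (D.σ1 0) (D.σ2 0 / 2) :=
  (taylor2 D.hσ D.hσ1 (D.hσ2 0)).mono nhdsWithin_le_nhds
lemma jσ1 : J (fun s => s * D.σ1 s) 0 (D.σ1 0) (D.σ2 0) := J.of_low (taylor1 D.hσ1 (D.hσ2 0))
lemma jσ2 : J (fun s => s ^ 2 * D.σ2 s) 0 0 (D.σ2 0) := J.of_low2 (castO (s := 0) (D.hσ2 0))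
lemma jκ : J (fun s => s * D.κ s) 0 (D.κ 0) (D.κ1 0) := J.of_low (taylor1 D.hκ (D.hκ1 0))
lemma jκ1 : J (fun s => s ^ 2 * D.κ1 s) 0 0 (D.κ1 0) := J.of_low2 (castO (s := 0) (D.hκ1 0))

lemma u_one : D.u =O[𝓝 0] (fun _ => (1 : ℝ)) :=
  ((D.hu 0).continuousAt.tendsto).isBigO_one ℝ

lemma ou1 : (fun s : ℝ => D.u s - 1) =O[𝓝 0] fun s : ℝ => s := by
  simpa [D.u0] using (D.hu 0).isBigO_sub

lemma sO : (fun s : ℝ => (s : ℂ)) =O[𝓝 0] fun s : ℝ => s := by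
  apply IsBigO.of_bound 1
  filter_upwards with s
  simp

lemma ou2 : (fun s : ℝ => D.u s - (1 + Complex.I * D.κ 0 * s)) =O[𝓝 0] fun s : ℝ => s ^ 2 := by
  refine integ (n := 1) (f' := fun s => Complex.I * D.κ s * D.u s - Complex.I * D.κ 0)
    (fun s => (D.hu s).sub (lin_deriv _ _ s)) (by simp [D.u0]) ?_
  have h1 := ((castO (s := 0) (D.hκ 0)).mul D.u_one).const_mul_left Complex.I
  have h2 := (D.ou1).const_mul_left (Complex.I * D.κ 0)
  simp only [mul_one] at h1
  refine (h1.add h2).congr (fun s => ?_) (fun s => ?_) <;> ring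

lemma ou3 : (fun s : ℝ => D.u s - (1 + Complex.I * D.κ 0 * s
    + (Complex.I * D.κ1 0 - D.κ 0 ^ 2) / 2 * s ^ 2)) =O[𝓝 0] fun s : ℝ => s ^ 3 := by
  refine integ (n := 2) (f' := fun s => Complex.I * D.κ s * D.u s
    - (Complex.I * D.κ 0 + (Complex.I * D.κ1 0 - D.κ 0 ^ 2) * s))
    (fun s => (D.hu s).sub (quad_deriv _ _ _ s)) (by simp [D.u0]) ?_
  have h1 := ((taylor1 D.hκ (D.hκ1 0)).mul D.u_one).const_mul_left Complex.I
  have h2 := (D.ou2).const_mul_left (Complex.I * D.κ 0)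
  have h3 := (sO.mul D.ou1).const_mul_left (Complex.I * D.κ1 0)
  simp only [mul_one, ← pow_two] at h1 h3
  refine ((h1.add h2).add h3).congr (fun s => ?_) (fun s => ?_)
  · linear_combination (-(D.κ 0 : ℂ) ^ 2 * s) * Complex.I_sq
  · ring

lemma og4 : (fun s : ℝ => D.g s - (0 + 1 * (s : ℂ) + Complex.I * D.κ 0 / 2 * s ^ 2
    + ((Complex.I * D.κ1 0 - D.κ 0 ^ 2) / 2) / 3 * s ^ 3)) =O[𝓝 0] fun s : ℝ => s ^ 4 := by
  refine integ (n := 3) (f' := _)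
    (fun s => (D.hg s).sub (cube_deriv _ _ _ _ s)) (by simp [D.g0]) ?_
  exact D.ou3

def p (s : ℝ) : ℂ := D.g s / s

lemma ju : J D.u 1 (Complex.I * D.κ 0) ((Complex.I * D.κ1 0 - D.κ 0 ^ 2) / 2) :=
  D.ou3.mono nhdsWithin_le_nhds

lemma jp : J D.p 1 (Complex.I * D.κ 0 / 2) ((Complex.I * D.κ1 0 - D.κ 0 ^ 2) / 6) := by
  have h1 := (D.og4).mono (nhdsWithin_le_nhds (s := {0}ᶜ))
  have h2 : (fun s : ℝ => (s : ℂ)⁻¹) =O[𝓝[≠] 0] fun s : ℝ => s⁻¹ := by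
    apply IsBigO.of_bound 1
    filter_upwards with s
    simp
  refine (h1.mul h2).congr' ?_ ?_
  · filter_upwards [self_mem_nhdsWithin] with s hs
    have hs' : (s : ℂ) ≠ 0 := by simpa using hs
    simp only [p]
    field_simp
    ring
  · filter_upwards [self_mem_nhdsWithin] with s hs
    have hs' : s ≠ 0 := by simpa using hs
    field_simp

end Dt
end

section
open ComplexConjugate Asymptotics

lemma re_zero_of {f : ℂ} (h : f + conj f = 0) : f.re = 0 := by
  rw [Complex.add_conj] at h
  have := congrArg Complex.re h
  simpa using this

lemma re_of_conj {f : ℂ} {r : ℝ} (h : f + conj f = ((2 * r : ℝ) : ℂ)) : f.re = r := by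
  rw [Complex.add_conj] at h
  have := congrArg Complex.re h
  simpa using this

namespace Dt
variable (D : Dt)

def F (s : ℝ) : ℂ :=
  Complex.I * (1 - D.ν) * (6 * (1 - D.ν) * (D.u s * D.u s * D.u s * conj (D.p s)
      * ((D.p s)⁻¹ * (D.p s)⁻¹ * (D.p s)⁻¹ * (D.p s)⁻¹))
      - 2 * ((5 - D.ν) * D.u s - 2 * (1 + D.ν) * (D.u s * D.u s * D.u s))
        * ((D.p s)⁻¹ * (D.p s)⁻¹ * (D.p s)⁻¹))
    - D.α₂ * (s * D.κ s) * (2 * (1 - D.ν) * (D.u s * D.u s * conj (D.p s))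
        * ((D.p s)⁻¹ * (D.p s)⁻¹ * (D.p s)⁻¹)
      + (2 * (1 - D.ν) + 2 * (1 + D.ν) * (D.u s * D.u s)) * ((D.p s)⁻¹ * (D.p s)⁻¹))
    - D.α₃ * (s ^ 2 * D.κ1 s) * ((1 - D.ν) * (D.u s * conj (D.p s)) * ((D.p s)⁻¹ * (D.p s)⁻¹)
      + (-(1 - D.ν) * conj (D.u s) + 2 * (1 + D.ν) * D.u s) * (D.p s)⁻¹)

lemma z0 (s : ℝ) (hs : s ≠ 0) : D.z 0 s = -s * D.p s := by
  have hs' : (s : ℂ) ≠ 0 := by simpa using hs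
  simp [z, p]; field_simp

lemma c0 (s : ℝ) (hs : s ≠ 0) : D.c 0 s = -s * conj (D.p s) := by
  have hs' : (s : ℂ) ≠ 0 := by simpa using hs
  simp [c, p]; field_simp

lemma p_ne (s : ℝ) (hs : s ≠ 0) (hg : D.g s ≠ 0) : D.p s ≠ 0 := by
  have hs' : (s : ℂ) ≠ 0 := by simpa using hs
  simp [p, hs, hg]

lemma Q_F (s : ℝ) (hs : s ≠ 0) (hg : D.g s ≠ 0) :
    D.Q 0 s = ((D.σ s / s ^ 3 : ℝ) : ℂ) * D.F s := by
  have hs' : (s : ℂ) ≠ 0 := by simpa using hs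
  have hp := D.p_ne s hs hg
  simp only [Q, QQ, D.z0 s hs, D.c0 s hs, F]
  push_cast
  field_simp
  ring

lemma jF : ∃ f0 f1 f2, J D.F f0 f1 f2 ∧ f0.re = 0 ∧ f1.re = 0 ∧ f2.re = 0 := by
  have u := D.ju
  have ub := u.cnj
  have pb := D.jp.cnj
  have q := D.jp.inv
  have q2 := q.mul q
  have q3 := q2.mul q
  have q4 := q3.mul q
  have u2 := u.mul u
  have u3 := u2.mul u
  have k := D.jκ
  have k1 := D.jκ1
  have C := J.const
  have hF := ((((C Complex.I).mul ((C 1).sub (C D.ν))).mul ((((C 6).mul ((C 1).sub (C D.ν))).mul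
      ((u3.mul pb).mul q4)).sub
      (((C 2).mul ((((C 5).sub (C D.ν)).mul u).sub (((C 2).mul ((C 1).add (C D.ν))).mul u3))).mul q3))).sub
      (((C D.α₂).mul k).mul (((((C 2).mul ((C 1).sub (C D.ν))).mul (u2.mul pb)).mul q3).add
        ((((C 2).mul ((C 1).sub (C D.ν))).add (((C 2).mul ((C 1).add (C D.ν))).mul u2)).mul q2)))).sub
      (((C D.α₃).mul k1).mul (((((C 1).sub (C D.ν)).mul (u.mul pb)).mul q2).add
        (((((C 1).sub (C D.ν)).neg.mul ub).add (((C 2).mul ((C 1).add (C D.ν))).mul u)).mul q)))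
  refine ⟨_, _, _, hF.congr (fun s => rfl) rfl rfl rfl, ?_, ?_, ?_⟩
  all_goals clear hF C k k1 u3 u2 q4 q3 q2 q pb ub u
  all_goals apply re_zero_of
  all_goals have e2 : conj (2:ℂ) = 2 := map_ofNat _ 2
  all_goals have e5 : conj (5:ℂ) = 5 := map_ofNat _ 5
  all_goals have e6 : conj (6:ℂ) = 6 := map_ofNat _ 6
  all_goals have a2 := congrArg (fun r : ℝ => (r : ℂ)) D.hα₂
  all_goals have a3 := congrArg (fun r : ℝ => (r : ℂ)) D.hα₃
  all_goals push_cast at a2 a3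
  all_goals simp only [map_add, map_mul, map_sub, map_neg, map_div₀, map_pow, map_one, map_zero,
    Complex.conj_I, Complex.conj_ofReal, e2, e5, e6]
  all_goals generalize (D.ν : ℂ) = n at *
  all_goals generalize (D.α₂ : ℂ) = b2 at *
  all_goals generalize (D.α₃ : ℂ) = b3 at *
  all_goals generalize (D.κ 0 : ℂ) = k at *
  all_goals generalize (D.κ1 0 : ℂ) = k1 at *
  all_goals have hI2 : Complex.I ^ 2 = -1 := Complex.I_sq
  all_goals have hI3 : Complex.I ^ 3 = -Complex.I := by rw [pow_succ, hI2]; ring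
  all_goals have hI4 : Complex.I ^ 4 = 1 := by rw [pow_succ, hI3]; linear_combination -hI2
  · ring
  · trans -4 * k * (b2 * (3 - n) - (n - 1) * (7 + n))
    · ring_nf
      simp only [hI2, hI3, hI4]
      ring
    · rw [a2]; ring
  · trans -4 * k1 * ((b2 * (3 - n) - (n - 1) * (7 + n)) + (b3 * (1 + n) - (1 - n) * (3 + n)))
    · ring_nf
      simp only [hI2, hI3, hI4]
      ring
    · rw [a2, a3]; ring
end Dt
end

section
open ComplexConjugate Asymptotics

namespace Dt
variable (D : Dt)

def S (s : ℝ) : ℂ :=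
  -2 * Complex.I * ((1 - D.ν) * (1 - D.ν)) * (D.u s * D.u s) * D.σ s * conj (D.p s)
    * ((D.p s)⁻¹ * (D.p s)⁻¹ * (D.p s)⁻¹)
  + 1 / 2 * (Complex.I * (1 - D.ν) * (-(2 * (1 - D.ν) * (2 * Complex.I * (s * D.κ s) * D.σ s + s * D.σ1 s)
        * D.u s * conj (D.p s)) + 8 * D.σ s - 4 * (1 + D.ν) * (D.u s * D.u s) * D.σ s)
      + 2 * (1 - D.ν) * D.α₂ * (s * D.κ s) * D.σ s * D.u s * conj (D.p s))
    * ((D.p s)⁻¹ * (D.p s)⁻¹)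
  + (-Complex.I * ((1 - D.ν) * (1 - D.ν)) * ((2 * Complex.I * ((s ^ 2 * D.κ1 s) * D.σ s
        + (s * D.κ s) * (s * D.σ1 s)) + s ^ 2 * D.σ2 s)
      + Complex.I * (s * D.κ s) * (2 * Complex.I * (s * D.κ s) * D.σ s + s * D.σ1 s))
    + (1 - D.ν) * D.α₂ * (((s ^ 2 * D.κ1 s) * D.σ s + (s * D.κ s) * (s * D.σ1 s))
        + Complex.I * ((s * D.κ s) * (s * D.κ s)) * D.σ s)
    + (1 - D.ν) * D.α₃ * (s ^ 2 * D.κ1 s) * D.σ s) * conj (D.p s) * (D.p s)⁻¹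
  - (Complex.I * (1 - D.ν) * (((1 - D.ν) * conj (D.u s) + 2 * (1 + D.ν) * D.u s)
      * (2 * Complex.I * (s * D.κ s) * D.σ s + s * D.σ1 s) - 4 * (s * D.σ1 s) * conj (D.u s))
    - D.α₂ * (s * D.κ s) * D.σ s * (3 * (1 - D.ν) * conj (D.u s) + 2 * (1 + D.ν) * D.u s))
    * (D.p s)⁻¹

lemma Φ_S (s : ℝ) (hs : s ≠ 0) (hg : D.g s ≠ 0) :
    D.Φ 0 s = ((1 / s ^ 2 : ℝ) : ℂ) * D.S s := by
  have hs' : (s : ℂ) ≠ 0 := by simpa using hs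
  have hp := D.p_ne s hs hg
  simp only [Φ, X, E, M, D.z0 s hs, D.c0 s hs, S]
  push_cast
  field_simp
  ring

lemma jS : ∃ f0 f1 f2, J D.S f0 f1 f2 ∧ f1.re = 0 := by
  have u := D.ju
  have ub := u.cnj
  have pb := D.jp.cnj
  have q := D.jp.inv
  have q2 := q.mul q
  have q3 := q2.mul q
  have u2 := u.mul u
  have k := D.jκ
  have k1 := D.jκ1
  have t := D.jσ
  have t1 := D.jσ1
  have t2 := D.jσ2
  have C := J.const
  have a := (C 1).sub (C D.ν)
  have b := (C 1).add (C D.ν)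
  have I2 := (C 2).mul (C Complex.I)
  have w := ((I2.mul k).mul t).add t1
  have H1 := ((((((C (-2)).mul (C Complex.I)).mul (a.mul a)).mul u2).mul t).mul pb).mul q3
  have H2 := ((C (1/2)).mul ((((C Complex.I).mul a).mul
    ((((((((C 2).mul a).mul w).mul u).mul pb).neg).add ((C 8).mul t)).sub
      ((((C 4).mul b).mul u2).mul t))).add
      (((((((C 2).mul a).mul (C D.α₂)).mul k).mul t).mul u).mul pb))).mul q2
  have kk := (k1.mul t).add (k.mul t1)
  have H3 := ((((((C Complex.I).neg.mul (a.mul a)).mul (((I2.mul kk).add t2).add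
      (((C Complex.I).mul k).mul w))).add
      ((a.mul (C D.α₂)).mul (kk.add (((C Complex.I).mul (k.mul k)).mul t)))).add
      (((a.mul (C D.α₃)).mul k1).mul t)).mul pb).mul q
  have H4 := ((((C Complex.I).mul a).mul ((((a.mul ub).add (((C 2).mul b).mul u)).mul w).sub
      (((C 4).mul t1).mul ub))).sub
      ((((C D.α₂).mul k).mul t).mul ((((C 3).mul a).mul ub).add (((C 2).mul b).mul u)))).mul q
  have hF := ((H1.add H2).add H3).sub H4
  refine ⟨_, _, _, hF.congr (fun s => rfl) rfl rfl rfl, ?_⟩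
  clear hF H1 H2 H3 H4 kk w I2 b a C t2 t1 t k1 k u2 q3 q2 q pb ub u
  apply re_zero_of
  have e2 : conj (2:ℂ) = 2 := map_ofNat _ 2
  have e3 : conj (3:ℂ) = 3 := map_ofNat _ 3
  have e4 : conj (4:ℂ) = 4 := map_ofNat _ 4
  have e8 : conj (8:ℂ) = 8 := map_ofNat _ 8
  have a2 := congrArg (fun r : ℝ => (r : ℂ)) D.hα₂
  push_cast at a2
  simp only [map_add, map_mul, map_sub, map_neg, map_div₀, map_pow, map_one, map_zero,
    Complex.conj_I, Complex.conj_ofReal, e2, e3, e4, e8]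
  generalize (D.ν : ℂ) = n at *
  generalize (D.α₂ : ℂ) = b2 at *
  generalize (D.α₃ : ℂ) = b3 at *
  generalize (D.κ 0 : ℂ) = k at *
  generalize (D.κ1 0 : ℂ) = k1 at *
  have hI2 : Complex.I ^ 2 = -1 := Complex.I_sq
  have hI3 : Complex.I ^ 3 = -Complex.I := by rw [pow_succ, hI2]; ring
  have hI4 : Complex.I ^ 4 = 1 := by rw [pow_succ, hI3]; linear_combination -hI2
  trans 4 * k * D.σ 0 * (b2 * (3 - n) - (n - 1) * (7 + n))
  · ring_nf
    simp only [hI2, hI3, hI4]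
    ring
  · rw [a2]; ring

lemma nhds_ne_Icc : ∀ᶠ s in 𝓝[≠] (0:ℝ), s ≠ 0 ∧ D.g s ≠ 0 := by
  have h1 : ∀ᶠ s in 𝓝 (0:ℝ), s ∈ Set.Icc (-D.l) D.l :=
    Icc_mem_nhds (by linarith [D.hl]) D.hl
  filter_upwards [nhdsWithin_le_nhds h1, self_mem_nhdsWithin] with s hs hs0
  exact ⟨hs0, D.nz s hs hs0⟩

lemma Φ_sym : Tendsto (fun e : ℝ => (D.Φ 0 (-e)).re - (D.Φ 0 e).re) (𝓝[>] 0) (𝓝 0) := by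
  obtain ⟨f0, f1, f2, hJ, hf⟩ := D.jS
  obtain ⟨C, hC⟩ := hJ.bound
  have hn : Tendsto (fun e : ℝ => -e) (𝓝[>] 0) (𝓝[≠] 0) := by
    refine tendsto_nhdsWithin_iff.2 ⟨?_, ?_⟩
    · have : Tendsto (fun e : ℝ => -e) (𝓝 0) (𝓝 (-0)) := continuous_neg.tendsto 0
      rw [neg_zero] at this
      exact this.mono_left nhdsWithin_le_nhds
    · filter_upwards [self_mem_nhdsWithin] with e he
      simp only [Set.mem_compl_iff, Set.mem_singleton_iff, neg_eq_zero]
      exact ne_of_gt he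
  have hp : (𝓝[>] (0:ℝ)) ≤ 𝓝[≠] 0 := nhdsWithin_mono 0 (fun x hx => ne_of_gt hx)
  have hb : Tendsto (fun e : ℝ => 2 * C * e) (𝓝[>] 0) (𝓝 0) := by
    have : Continuous (fun e : ℝ => 2 * C * e) := by fun_prop
    have := this.tendsto 0
    rw [mul_zero] at this
    exact this.mono_left nhdsWithin_le_nhds
  refine squeeze_zero_norm' ?_ hb
  filter_upwards [hp hC, hn.eventually hC, hp D.nhds_ne_Icc, hn.eventually D.nhds_ne_Icc,
    self_mem_nhdsWithin] with e h1 h2 h3 h4 he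
  have he : 0 < e := he
  rw [D.Φ_S e h3.1 h3.2, D.Φ_S (-e) h4.1 h4.2, Complex.re_ofReal_mul, Complex.re_ofReal_mul]
  have r1 := (Complex.abs_re_le_norm _).trans h1
  have r2 := (Complex.abs_re_le_norm _).trans h2
  have k1 : (D.S e - (f0 + f1 * e + f2 * (e:ℂ) ^ 2)).re = (D.S e).re - (f0.re + f2.re * e ^ 2) := by
    rw [← Complex.ofReal_pow]
    simp [hf, -Complex.ofReal_pow]
  have k2 : (D.S (-e) - (f0 + f1 * ((-e : ℝ) : ℂ) + f2 * ((-e : ℝ):ℂ) ^ 2)).re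
      = (D.S (-e)).re - (f0.re + f2.re * e ^ 2) := by
    rw [← Complex.ofReal_pow]
    simp [hf, -Complex.ofReal_pow]
  rw [k1] at r1
  rw [k2] at r2
  simp only [norm_pow, norm_neg, Real.norm_eq_abs, abs_of_pos he] at r1 r2 ⊢
  have e2 : 0 < e ^ 2 := by positivity
  rw [neg_sq, ← mul_sub, abs_mul, abs_of_pos (by positivity), one_div, inv_mul_le_iff₀ e2]
  rw [abs_le] at *
  constructor <;> nlinarith [r1.1, r1.2, r2.1, r2.2]

lemma cont_of {f : ℝ → ℂ} {f' : ℝ → ℂ} (h : ∀ s, HasDerivAt f (f' s) s) : Continuous f :=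
  continuous_iff_continuousAt.2 fun s => (h s).continuousAt
lemma cont_ofR {f : ℝ → ℝ} {f' : ℝ → ℝ} (h : ∀ s, HasDerivAt f (f' s) s) : Continuous f :=
  continuous_iff_continuousAt.2 fun s => (h s).continuousAt

lemma cg : Continuous D.g := cont_of D.hg
lemma cu : Continuous D.u := cont_of D.hu
lemma cκ : Continuous D.κ := cont_ofR D.hκ
lemma cκ1 : Continuous D.κ1 := cont_ofR D.hκ1
lemma cσ : Continuous D.σ := cont_ofR D.hσ
lemma cσ1 : Continuous D.σ1 := cont_ofR D.hσ1
lemma cσ2 : Continuous D.σ2 := cont_ofR D.hσ2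
lemma cz (h : ℝ) : Continuous (D.z h) := cont_of (D.hz h)
lemma cc (h : ℝ) : Continuous (D.c h) := cont_of (D.hc h)

lemma Q_contAt (h s : ℝ) (h0 : D.z h s ≠ 0) : ContinuousAt (D.Q h) s := by
  have := D.cu.continuousAt (x := s)
  have := D.cκ.continuousAt (x := s)
  have := D.cκ1.continuousAt (x := s)
  have := D.cσ.continuousAt (x := s)
  have := (D.cz h).continuousAt (x := s)
  have := (D.cc h).continuousAt (x := s)
  have hc : Continuous (fun w : ℂ => conj w) := Complex.continuous_conj
  have := hc.continuousAt.comp (D.cu.continuousAt (x := s))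
  have hr : Continuous (fun w : ℝ => (w : ℂ)) := Complex.continuous_ofReal
  unfold Q QQ
  fun_prop (disch := simp [h0])

/-- A real function continuous off `0` and bounded near `0` is bounded on `[-l, l]`. -/
lemma bdd_of {f : ℝ → ℝ} (hc : ∀ s ∈ Set.Icc (-D.l) D.l, s ≠ 0 → ContinuousAt f s)
    (hb : f =O[𝓝[≠] 0] (fun _ => (1:ℝ))) :
    ∃ M, ∀ s ∈ Set.Icc (-D.l) D.l, s ≠ 0 → |f s| ≤ M := by
  obtain ⟨C, hC⟩ := hb.bound
  rw [eventually_nhdsWithin_iff, Metric.eventually_nhds_iff] at hC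
  obtain ⟨e, he, hC⟩ := hC
  have hK : IsCompact (Set.Icc (-D.l) D.l ∩ {s | e ≤ |s|}) :=
    isCompact_Icc.inter_right (isClosed_le continuous_const continuous_abs)
  obtain ⟨M, hM⟩ := hK.exists_bound_of_continuousOn (f := f) (by
    rintro s ⟨hs, hs'⟩
    refine (hc s hs ?_).continuousWithinAt
    rintro rfl
    simp at hs'
    linarith)
  refine ⟨max C M, fun s hs hs0 => ?_⟩
  by_cases h : |s| < e
  · have := hC (y := s) (by simpa using h) hs0
    simp at this
    exact this.trans (le_max_left _ _)
  · exact (hM s ⟨hs, by simpa using h⟩).trans (le_max_right _ _)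

lemma z0_ne (s : ℝ) (hs : s ∈ Set.Icc (-D.l) D.l) (h0 : s ≠ 0) : D.z 0 s ≠ 0 := by
  have := D.nz s hs h0
  simpa [z] using this

lemma Q_bdd : ∃ M, ∀ s ∈ Set.Icc (-D.l) D.l, s ≠ 0 → |(D.Q 0 s).re| ≤ M := by
  apply D.bdd_of (f := fun s => (D.Q 0 s).re)
  · intro s hs h0
    exact Complex.continuous_re.continuousAt.comp (D.Q_contAt 0 s (D.z0_ne s hs h0))
  · obtain ⟨f0, f1, f2, hJ, h0, h1, h2⟩ := D.jF
    have hσ : D.σ =O[𝓝[≠] 0] (fun _ => (1:ℝ)) :=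
      (D.cσ.continuousAt.tendsto.mono_left nhdsWithin_le_nhds).isBigO_one ℝ
    have hF : (fun s => (D.F s).re) =O[𝓝[≠] 0] fun s : ℝ => s ^ 3 := by
      refine IsBigO.trans (IsBigO.of_bound 1 ?_) hJ
      filter_upwards with s
      have : (D.F s - (f0 + f1 * s + f2 * (s:ℂ) ^ 2)).re = (D.F s).re := by
        rw [← Complex.ofReal_pow]
        simp [h0, h1, h2, -Complex.ofReal_pow]
      rw [← this, one_mul]
      exact Complex.abs_re_le_norm _
    obtain ⟨C, hC⟩ := (hσ.mul hF).bound
    apply IsBigO.of_bound C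
    filter_upwards [hC, D.nhds_ne_Icc] with s hs hs'
    rw [D.Q_F s hs'.1 hs'.2, Complex.re_ofReal_mul]
    have h3 : 0 < |s ^ 3| := abs_pos.2 (pow_ne_zero 3 hs'.1)
    simp only [norm_mul, one_mul, Real.norm_eq_abs, abs_div, abs_one, mul_one] at hs ⊢
    rw [div_mul_eq_mul_div, div_le_iff₀ h3]
    exact hs
end Dt
end

section
open ComplexConjugate Asymptotics

namespace Dt
variable (D : Dt)

def al : ℝ := (4 * (1 - D.ν) * (1 + D.ν) + 4 * D.ν * D.α₂) * D.κ 0 ^ 2 * D.σ 0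

lemma A0 : D.A 0 = Complex.I * D.al := by
  have a2 := congrArg (fun r : ℝ => (r : ℂ)) D.hα₂
  have a3 := congrArg (fun r : ℝ => (r : ℂ)) D.hα₃
  push_cast at a2 a3
  simp only [A, E, N, D.u0, map_one, al]
  push_cast
  generalize (D.ν : ℂ) = n at *
  generalize (D.α₂ : ℂ) = b2 at *
  generalize (D.α₃ : ℂ) = b3 at *
  generalize (D.κ 0 : ℂ) = k at *
  generalize (D.κ1 0 : ℂ) = k1 at *
  generalize (D.σ 0 : ℂ) = t at *
  generalize (D.σ1 0 : ℂ) = t1 at *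
  generalize (D.σ2 0 : ℂ) = t2 at *
  have hI2 : Complex.I ^ 2 = -1 := Complex.I_sq
  have hI3 : Complex.I ^ 3 = -Complex.I := by rw [pow_succ, hI2]; ring
  trans Complex.I * ((4 * (1 - n) * (1 + n) + 4 * n * b2) * k ^ 2 * t)
      + (2 * k * t1 + 2 * k1 * t) * (b2 * (3 - n) - (n - 1) * (7 + n))
      + 2 * k1 * t * (b3 * (1 + n) - (1 - n) * (3 + n))
  · ring_nf
    simp only [hI2, hI3]
    ring
  · rw [a2, a3]; ring

lemma gO : (fun s : ℝ => D.g s - s) =O[𝓝 0] fun s : ℝ => s ^ 2 := by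
  refine integ (n := 1) (f' := fun s => D.u s - 1) (fun s => (D.hg s).sub ?_) (by simp [D.g0]) ?_
  · simpa using ofRe (hasDerivAt_id s)
  · simpa using D.ou1

lemma lower : ∃ m > 0, ∃ h₀ > 0, ∀ h : ℝ, |h| < h₀ → ∀ s ∈ Set.Icc (-D.l) D.l,
    m * |s| ≤ ‖D.z h s‖ := by
  have hl := D.hl
  have h1 : ∀ᶠ s : ℝ in 𝓝 0, ‖D.g s - s‖ ≤ 1 / 2 * ‖s‖ := by
    have : (fun s : ℝ => D.g s - s) =o[𝓝 0] fun s : ℝ => s := by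
      refine D.gO.trans_isLittleO ?_
      simpa using isLittleO_pow_pow (𝕜 := ℝ) (m := 1) (n := 2) (by norm_num)
    exact this.bound (by norm_num)
  rw [Metric.eventually_nhds_iff] at h1
  obtain ⟨e, he, h1⟩ := h1
  have hK : IsCompact (Set.Icc (-D.l) D.l ∩ {s | e ≤ |s|}) :=
    isCompact_Icc.inter_right (isClosed_le continuous_const continuous_abs)
  obtain ⟨d, hd, hd'⟩ : ∃ d > 0, ∀ s ∈ Set.Icc (-D.l) D.l ∩ {s | e ≤ |s|}, d ≤ ‖D.g s‖ := by
    refine hK.exists_forall_le' (f := fun s => ‖D.g s‖) (a := 0) D.cg.norm.continuousOn ?_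
    rintro s ⟨hs, hs'⟩
    have : s ≠ 0 := by
      rintro rfl
      simp at hs'
      linarith
    exact norm_pos_iff.2 (D.nz s hs this)
  refine ⟨min (1/2) (d / (2 * D.l)), by positivity, d / 2, by positivity, fun h hh s hs => ?_⟩
  by_cases hse : |s| < e
  · have h2 := h1 (y := s) (by simpa using hse)
    have h3 := (Complex.abs_re_le_norm _).trans h2
    have h4 := Complex.abs_re_le_norm (D.z h s)
    have h5 : (D.z h s).re = -(D.g s).re := by simp [z]
    simp at h3
    rw [h5, abs_neg] at h4
    have h6 := abs_sub_abs_le_abs_sub s (D.g s).re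
    rw [abs_sub_comm] at h6
    have := mul_le_mul_of_nonneg_right (min_le_left (1/2) (d / (2 * D.l))) (abs_nonneg s)
    linarith
  · have h2 := hd' s ⟨hs, by simpa using hse⟩
    have h3 : ‖D.z h s‖ ≥ ‖D.g s‖ - |h| := by
      have := norm_sub_norm_le (D.g s) (-Complex.I * h)
      rw [← norm_neg (D.g s - _)] at this
      simp at this
      simpa [z, add_comm, sub_eq_add_neg] using this
    have h4 : |s| ≤ D.l := abs_le.2 hs
    have h5 : min (1/2) (d / (2 * D.l)) * |s| ≤ d / (2 * D.l) * D.l :=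
      mul_le_mul (min_le_right _ _) h4 (abs_nonneg _) (by positivity)
    have h6 : d / (2 * D.l) * D.l = d / 2 := by field_simp
    linarith

lemma z_ne {m h₀ : ℝ} (hm : 0 < m) (hlow : ∀ h : ℝ, |h| < h₀ → ∀ s ∈ Set.Icc (-D.l) D.l,
    m * |s| ≤ ‖D.z h s‖) (h : ℝ) (hh : |h| < h₀) (s : ℝ) (hs : s ∈ Set.Icc (-D.l) D.l)
    (hor : h ≠ 0 ∨ s ≠ 0) : D.z h s ≠ 0 := by
  by_cases h0 : s = 0
  · subst h0
    have : h ≠ 0 := by tauto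
    simp [z, D.g0, this]
  · have := hlow h hh s hs
    have h2 : 0 < m * |s| := mul_pos hm (abs_pos.2 h0)
    exact norm_pos_iff.1 (h2.trans_le this)

lemma c_conj (h s : ℝ) : D.c h s = conj (D.z h s) := by
  simp [c, z]

lemma cEP : Continuous D.EP := by
  have := D.cκ
  have := D.cκ1
  have := D.hκ2
  have := D.cσ
  have := D.cσ1
  have := D.cσ2
  have := D.hσ3
  have hr : Continuous (fun w : ℝ => (w : ℂ)) := Complex.continuous_ofReal
  unfold EP
  fun_prop

lemma dA : Differentiable ℝ D.A := by
  have h1 : Differentiable ℝ (fun s => (D.κ s : ℂ)) := fun s => (ofRe (D.hκ s)).differentiableAt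
  have h2 : Differentiable ℝ (fun s => (D.κ1 s : ℂ)) := fun s => (ofRe (D.hκ1 s)).differentiableAt
  have h3 : Differentiable ℝ (fun s => (D.σ s : ℂ)) := fun s => (ofRe (D.hσ s)).differentiableAt
  have h4 : Differentiable ℝ (fun s => (D.σ1 s : ℂ)) := fun s => (ofRe (D.hσ1 s)).differentiableAt
  have h5 : Differentiable ℝ (fun s => (D.σ2 s : ℂ)) := fun s => (ofRe (D.hσ2 s)).differentiableAt
  have h6 : Differentiable ℝ (fun s => D.u s) := fun s => (D.hu s).differentiableAt
  have h7 : Differentiable ℝ (fun s => conj (D.u s)) := fun s => (D.hub s).differentiableAt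
  unfold A E N
  fun_prop

lemma R_contAt (h s : ℝ) (h0 : D.z h s ≠ 0) : ContinuousAt (D.R h) s := by
  have := D.dA.continuous.continuousAt (x := s)
  have := D.cEP.continuousAt (x := s)
  have := (D.cz h).continuousAt (x := s)
  have := (D.cc h).continuousAt (x := s)
  unfold R
  fun_prop (disch := simp [h0])

lemma A_lip : ∃ C, ∀ s ∈ Set.Icc (-D.l) D.l, s ≠ 0 → ‖D.A s - D.A 0‖ ≤ C * |s| := by
  obtain ⟨M, hM⟩ := D.bdd_of (f := fun s => ‖D.A s - D.A 0‖ / |s|) (by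
    intro s hs h0
    have := D.dA.continuous.continuousAt (x := s)
    fun_prop (disch := simp [h0])) (by
    obtain ⟨C, hC⟩ := ((D.dA 0).isBigO_sub.mono nhdsWithin_le_nhds : _ =O[𝓝[≠] (0:ℝ)] _).bound
    apply IsBigO.of_bound C
    filter_upwards [hC, self_mem_nhdsWithin] with s hs h0
    have : 0 < |s| := abs_pos.2 h0
    simp only [sub_zero, Real.norm_eq_abs, abs_div, abs_norm, abs_abs, abs_one, mul_one] at hs ⊢
    rwa [div_le_iff₀ this])
  refine ⟨M, fun s hs h0 => ?_⟩
  have := hM s hs h0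
  have h1 : 0 < |s| := abs_pos.2 h0
  rwa [abs_of_nonneg (by positivity), div_le_iff₀ h1] at this

lemma g_lip : ∃ C, ∀ s ∈ Set.Icc (-D.l) D.l, s ≠ 0 → ‖D.g s - s‖ ≤ C * |s| ^ 2 := by
  obtain ⟨M, hM⟩ := D.bdd_of (f := fun s => ‖D.g s - s‖ / |s| ^ 2) (by
    intro s hs h0
    have := D.cg.continuousAt (x := s)
    have hr : ContinuousAt (fun w : ℝ => (w : ℂ)) s := Complex.continuous_ofReal.continuousAt
    fun_prop (disch := simp [h0])) (by
    obtain ⟨C, hC⟩ := (D.gO.mono nhdsWithin_le_nhds : _ =O[𝓝[≠] (0:ℝ)] _).bound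
    apply IsBigO.of_bound C
    filter_upwards [hC, self_mem_nhdsWithin] with s hs h0
    have : 0 < |s| := abs_pos.2 h0
    simp only [norm_pow, Real.norm_eq_abs, abs_div, abs_norm, abs_pow, abs_abs, abs_one, mul_one] at hs ⊢
    rwa [div_le_iff₀ (by positivity)])
  refine ⟨M, fun s hs h0 => ?_⟩
  have := hM s hs h0
  have h1 : 0 < |s| := abs_pos.2 h0
  rwa [abs_of_nonneg (by positivity), div_le_iff₀ (by positivity)] at this

/-- `Re R_h` with the Poisson kernel removed. -/
def B (h s : ℝ) : ℝ := (D.R h s).re + D.al * (h / (s ^ 2 + h ^ 2))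

lemma B_eq (h s : ℝ) (h0 : D.z h s ≠ 0) (hs : s ≠ 0) :
    D.B h s = ((D.A s - D.A 0) / D.z h s
      + Complex.I * D.al * ((D.g s - s) / (D.z h s * (-Complex.I * h - s)))
      - D.EP s * (D.c h s / D.z h s)).re := by
  have hw : (-Complex.I * h - s : ℂ) ≠ 0 := by
    intro h
    have := congrArg Complex.re h
    simp at this
    exact hs this
  have hp : 0 < s ^ 2 + h ^ 2 := by positivity
  have hp' : ((s:ℂ) ^ 2 + h ^ 2) ≠ 0 := by exact_mod_cast hp.ne'
  have hI2 : Complex.I ^ 2 = -1 := Complex.I_sq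
  have key : (Complex.I * D.al / (-Complex.I * h - s) : ℂ)
      = ((-(D.al * (h / (s ^ 2 + h ^ 2))) : ℝ) : ℂ)
        + Complex.I * ((-(D.al * (s / (s ^ 2 + h ^ 2))) : ℝ) : ℂ) := by
    push_cast
    rw [div_eq_iff hw]
    field_simp
    linear_combination (-(D.al:ℂ) * s * h) * hI2
  have h1 : D.R h s = ((D.A s - D.A 0) / D.z h s
      + Complex.I * D.al * ((D.g s - s) / (D.z h s * (-Complex.I * h - s)))
      - D.EP s * (D.c h s / D.z h s)) + (Complex.I * D.al / (-Complex.I * h - s) : ℂ) := by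
    have hzz : D.g s - s = (-Complex.I * h - s : ℂ) - D.z h s := by simp only [z]; ring
    rw [hzz, R, D.A0]
    generalize D.z h s = z at *
    generalize (-Complex.I * h - s : ℂ) = w at *
    field_simp
    ring
  rw [B, h1, key, Complex.add_re]
  simp [-Complex.ofReal_neg, -Complex.ofReal_mul, -Complex.ofReal_div]

lemma B_bdd : ∃ m > 0, ∃ h₀ > 0, ∃ M, ∀ h : ℝ, |h| < h₀ → ∀ s ∈ Set.Icc (-D.l) D.l,
    m * |s| ≤ ‖D.z h s‖ ∧ (s ≠ 0 → |D.B h s| ≤ M) := by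
  obtain ⟨m, hm, h₀, hh₀, hlow⟩ := D.lower
  obtain ⟨C1, hC1⟩ := D.A_lip
  obtain ⟨C2, hC2⟩ := D.g_lip
  obtain ⟨C3, hC3⟩ := isCompact_Icc.exists_bound_of_continuousOn (s := Set.Icc (-D.l) D.l)
    D.cEP.continuousOn
  refine ⟨m, hm, h₀, hh₀, C1 / m + |D.al| * (C2 / m) + C3, fun h hh s hs => ⟨hlow h hh s hs, ?_⟩⟩
  intro hs0
  have hz := D.z_ne hm hlow h hh s hs (Or.inr hs0)
  have hzn : 0 < ‖D.z h s‖ := norm_pos_iff.2 hz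
  have hsp : 0 < |s| := abs_pos.2 hs0
  rw [D.B_eq h s hz hs0]
  refine (Complex.abs_re_le_norm _).trans ((norm_sub_le _ _).trans (add_le_add
    ((norm_add_le _ _).trans (add_le_add ?_ ?_)) ?_))
  · rw [norm_div, div_le_div_iff₀ hzn hm]
    have h1 := hC1 s hs hs0
    have h2 := hlow h hh s hs
    have hC : 0 ≤ C1 := by
      by_contra hc
      push Not at hc
      have := norm_nonneg (D.A s - D.A 0)
      nlinarith
    nlinarith
  · rw [norm_mul, norm_mul, Complex.norm_I, one_mul, Complex.norm_real, Real.norm_eq_abs]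
    refine mul_le_mul_of_nonneg_left ?_ (abs_nonneg _)
    have hw : |s| ≤ ‖(-Complex.I * h - s : ℂ)‖ := by
      have := Complex.abs_re_le_norm (-Complex.I * h - s : ℂ)
      simpa using this
    have h1 := hC2 s hs hs0
    have h2 := hlow h hh s hs
    have hC : 0 ≤ C2 := by
      by_contra hc
      push Not at hc
      have := norm_nonneg (D.g s - s)
      have : 0 < |s| ^ 2 := by positivity
      nlinarith
    rw [norm_div, norm_mul, div_le_div_iff₀ (mul_pos hzn (hsp.trans_le hw)) hm]
    have h3 : m * |s| * |s| ≤ ‖D.z h s‖ * ‖(-Complex.I * h - s : ℂ)‖ :=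
      mul_le_mul h2 hw (abs_nonneg _) hzn.le
    calc ‖D.g s - s‖ * m ≤ C2 * |s| ^ 2 * m := mul_le_mul_of_nonneg_right h1 hm.le
      _ = C2 * (m * |s| * |s|) := by ring
      _ ≤ _ := mul_le_mul_of_nonneg_left h3 hC
  · rw [norm_mul, norm_div, D.c_conj, RCLike.norm_conj, div_self hzn.ne', mul_one]
    exact hC3 s hs

end Dt
end

section
open ComplexConjugate Asymptotics

namespace Dt
variable (D : Dt)

lemma Φ_per (h : ℝ) : D.Φ h D.l = D.Φ h (-D.l) := by
  simp only [Φ, X, E, M, z, c, D.pg, D.pu, D.pκ, D.pκ1, D.pσ, D.pσ1, D.pσ2]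

lemma meas_of {f : ℝ → ℝ} (hc : ∀ s ∈ Set.Icc (-D.l) D.l, s ≠ 0 → ContinuousAt f s) :
    AEStronglyMeasurable f (volume.restrict (Set.uIoc (-D.l) D.l)) := by
  have hl : -D.l ≤ D.l := by linarith [D.hl]
  rw [Set.uIoc_of_le hl]
  have h1 : AEStronglyMeasurable f (volume.restrict (Set.Ioc (-D.l) D.l \ {0})) := by
    refine ContinuousOn.aestronglyMeasurable (fun s hs => ?_)
      (measurableSet_Ioc.diff (measurableSet_singleton 0))
    exact (hc s ⟨hs.1.1.le, hs.1.2⟩ hs.2).continuousWithinAt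
  have h2 : (Set.Ioc (-D.l) D.l \ {0} : Set ℝ) =ᵐ[volume] Set.Ioc (-D.l) D.l :=
    sdiff_null_ae_eq_self (by simp)
  rwa [Measure.restrict_congr_set h2] at h1

lemma intg_of {f : ℝ → ℝ} {M : ℝ} (hc : ∀ s ∈ Set.Icc (-D.l) D.l, s ≠ 0 → ContinuousAt f s)
    (hb : ∀ s ∈ Set.Icc (-D.l) D.l, s ≠ 0 → |f s| ≤ M) :
    IntervalIntegrable f volume (-D.l) D.l := by
  have hl : -D.l ≤ D.l := by linarith [D.hl]
  have h1 := D.meas_of hc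
  rw [intervalIntegrable_iff]
  have : IsFiniteMeasure (volume.restrict (Set.uIoc (-D.l) D.l)) :=
    ⟨by simp [Set.uIoc_of_le hl]⟩
  refine Integrable.of_bound h1 M ?_
  rw [Set.uIoc_of_le hl, ae_restrict_iff' measurableSet_Ioc]
  have : ∀ᵐ s : ℝ, s ≠ 0 := by simp [ae_iff]
  filter_upwards [this] with s h0 hs
  exact hb s ⟨hs.1.le, hs.2⟩ h0

lemma re_cont {f : ℝ → ℂ} {s : ℝ} (h : ContinuousAt f s) : ContinuousAt (fun s => (f s).re) s :=
  Complex.continuous_re.continuousAt.comp h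

lemma ftc (h a b : ℝ) (hab : Set.uIcc a b ⊆ Set.Icc (-D.l) D.l) (hz : ∀ s ∈ Set.uIcc a b, D.z h s ≠ 0) :
    ∫ s in a..b, ((D.Q h s).re - (D.R h s).re) = (D.Φ h b).re - (D.Φ h a).re := by
  refine intervalIntegral.integral_eq_sub_of_hasDerivAt (f := fun s => (D.Φ h s).re) ?_ ?_
  · intro s hs
    have := hasDerivAt_re' (D.hΦ h s (hz s hs))
    simpa using this
  · apply ContinuousOn.intervalIntegrable
    intro s hs
    exact ((re_cont (D.Q_contAt h s (hz s hs))).sub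
      (re_cont (D.R_contAt h s (hz s hs)))).continuousWithinAt

lemma int_h (h : ℝ) (hz : ∀ s ∈ Set.Icc (-D.l) D.l, D.z h s ≠ 0) :
    ∫ s in (-D.l)..D.l, (D.Q h s).re = ∫ s in (-D.l)..D.l, (D.R h s).re := by
  have hl : -D.l ≤ D.l := by linarith [D.hl]
  have h1 := D.ftc h (-D.l) D.l (by rw [Set.uIcc_of_le hl]) (by rwa [Set.uIcc_of_le hl])
  rw [intervalIntegral.integral_sub, D.Φ_per, sub_self] at h1
  · linarith
  · apply ContinuousOn.intervalIntegrable
    intro s hs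
    rw [Set.uIcc_of_le hl] at hs
    exact (re_cont (D.Q_contAt h s (hz s hs))).continuousWithinAt
  · apply ContinuousOn.intervalIntegrable
    intro s hs
    rw [Set.uIcc_of_le hl] at hs
    exact (re_cont (D.R_contAt h s (hz s hs))).continuousWithinAt

lemma B0 (s : ℝ) : D.B 0 s = (D.R 0 s).re := by simp [B]

lemma R_bdd : ∃ M, ∀ s ∈ Set.Icc (-D.l) D.l, s ≠ 0 → |(D.R 0 s).re| ≤ M := by
  obtain ⟨m, hm, h₀, hh₀, M, hM⟩ := D.B_bdd
  refine ⟨M, fun s hs h0 => ?_⟩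
  rw [← D.B0]
  exact (hM 0 (by simpa using hh₀) s hs).2 h0

lemma intQ : IntervalIntegrable (fun s => (D.Q 0 s).re) volume (-D.l) D.l := by
  obtain ⟨M, hM⟩ := D.Q_bdd
  exact D.intg_of (fun s hs h0 => re_cont (D.Q_contAt 0 s (D.z0_ne s hs h0))) hM

lemma intR : IntervalIntegrable (fun s => (D.R 0 s).re) volume (-D.l) D.l := by
  obtain ⟨M, hM⟩ := D.R_bdd
  exact D.intg_of (fun s hs h0 => re_cont (D.R_contAt 0 s (D.z0_ne s hs h0))) hM

lemma int_0 : ∫ s in (-D.l)..D.l, (D.Q 0 s).re = ∫ s in (-D.l)..D.l, (D.R 0 s).re := by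
  have hl := D.hl
  rw [← sub_eq_zero, ← intervalIntegral.integral_sub D.intQ D.intR]
  obtain ⟨M1, hM1⟩ := D.Q_bdd
  obtain ⟨M2, hM2⟩ := D.R_bdd
  have hi := D.intQ.sub D.intR
  have hlim : Tendsto (fun e : ℝ => |(D.Φ 0 (-e)).re - (D.Φ 0 e).re| + (M1 + M2) * (2 * e))
      (𝓝[>] 0) (𝓝 0) := by
    have h1 := D.Φ_sym.abs
    have : Continuous (fun e : ℝ => (M1 + M2) * (2 * e)) := by fun_prop
    have h2 := (this.tendsto 0).mono_left (nhdsWithin_le_nhds (s := Set.Ioi 0))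
    simpa using h1.add h2
  rw [← abs_nonpos_iff]
  refine ge_of_tendsto hlim ?_
  have hev : ∀ᶠ e : ℝ in 𝓝[>] 0, e ∈ Set.Ioo 0 D.l := Ioo_mem_nhdsGT hl
  filter_upwards [hev] with e he
  obtain ⟨he, hel⟩ := he
  have sub : ∀ a b : ℝ, a ∈ Set.Icc (-D.l) D.l → b ∈ Set.Icc (-D.l) D.l →
      IntervalIntegrable (fun s => (D.Q 0 s).re - (D.R 0 s).re) volume a b := by
    intro a b ha hb
    refine hi.mono_set ?_
    rw [Set.uIcc_of_le (by linarith : -D.l ≤ D.l)]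
    exact Set.uIcc_subset_Icc ha hb
  have m1 : -D.l ∈ Set.Icc (-D.l) D.l := ⟨by linarith, by linarith⟩
  have m2 : -e ∈ Set.Icc (-D.l) D.l := ⟨by linarith, by linarith⟩
  have m3 : e ∈ Set.Icc (-D.l) D.l := ⟨by linarith, by linarith⟩
  have m4 : D.l ∈ Set.Icc (-D.l) D.l := ⟨by linarith, by linarith⟩
  rw [← intervalIntegral.integral_add_adjacent_intervals (sub _ _ m1 m2) (sub _ _ m2 m4),
    ← intervalIntegral.integral_add_adjacent_intervals (sub _ _ m2 m3) (sub _ _ m3 m4)]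
  have f1 := D.ftc 0 (-D.l) (-e) (Set.uIcc_subset_Icc m1 m2) (by
    intro s hs
    have h1 := Set.uIcc_subset_Icc m1 m2 hs
    rw [Set.uIcc_of_le (by linarith)] at hs
    exact D.z0_ne s h1 (by linarith [hs.2] : s < 0).ne)
  have f2 := D.ftc 0 e D.l (Set.uIcc_subset_Icc m3 m4) (by
    intro s hs
    have h1 := Set.uIcc_subset_Icc m3 m4 hs
    rw [Set.uIcc_of_le (by linarith)] at hs
    exact D.z0_ne s h1 (by linarith [hs.1] : 0 < s).ne')
  have f3 : ‖∫ s in (-e)..e, ((D.Q 0 s).re - (D.R 0 s).re)‖ ≤ (M1 + M2) * |e - -e| := by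
    apply intervalIntegral.norm_integral_le_of_norm_le_const_ae
    have : ∀ᵐ s : ℝ, s ≠ 0 := by simp [ae_iff]
    filter_upwards [this] with s h0 hs
    have h1 := Set.uIcc_subset_Icc m2 m3 (Set.uIoc_subset_uIcc hs)
    exact (norm_sub_le _ _).trans (add_le_add (hM1 s h1 h0) (hM2 s h1 h0))
  rw [f1, f2, D.Φ_per]
  rw [show |e - -e| = 2 * e by rw [sub_neg_eq_add, ← two_mul, abs_of_pos (by linarith)],
    Real.norm_eq_abs] at f3
  have e1 : (D.Φ 0 (-e)).re - (D.Φ 0 (-D.l)).re + ((∫ s in (-e)..e, ((D.Q 0 s).re - (D.R 0 s).re)) +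
      ((D.Φ 0 (-D.l)).re - (D.Φ 0 e).re)) = ((D.Φ 0 (-e)).re - (D.Φ 0 e).re)
        + ∫ s in (-e)..e, ((D.Q 0 s).re - (D.R 0 s).re) := by ring
  rw [e1]
  exact (abs_add_le _ _).trans (add_le_add le_rfl f3)

lemma poisson (l h : ℝ) (h0 : h ≠ 0) :
    ∫ s in (-l)..l, h / (s ^ 2 + h ^ 2) = 2 * arctan (l / h) := by
  have : ∀ s ∈ Set.uIcc (-l) l, HasDerivAt (fun s => arctan (s / h)) (h / (s ^ 2 + h ^ 2)) s := by
    intro s _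
    have h1 := ((hasDerivAt_id s).div_const h).arctan
    refine h1.congr_deriv ?_
    have : 0 < s ^ 2 + h ^ 2 := by positivity
    simp only [id]
    field_simp
    ring
  rw [intervalIntegral.integral_eq_sub_of_hasDerivAt this]
  · rw [neg_div, arctan_neg]; ring
  · apply Continuous.intervalIntegrable
    have : ∀ s : ℝ, s ^ 2 + h ^ 2 ≠ 0 := fun s => by positivity
    fun_prop (disch := simp [this])

lemma lim_Q (f : Filter ℝ) [f.IsCountablyGenerated] (hf : f ≤ 𝓝[≠] 0) (b : ℝ)
    (hb : Tendsto (fun h => arctan (D.l / h)) f (𝓝 b)) :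
    Tendsto (fun h => ∫ s in (-D.l)..D.l, (D.Q h s).re) f
      (𝓝 ((∫ s in (-D.l)..D.l, (D.Q 0 s).re) - D.al * (2 * b))) := by
  have hl : -D.l ≤ D.l := by linarith [D.hl]
  obtain ⟨m, hm, h₀, hh₀, M, hM⟩ := D.B_bdd
  have hlow := fun h hh s hs => (hM h hh s hs).1
  have hf0 : f ≤ 𝓝 0 := hf.trans nhdsWithin_le_nhds
  have hsm : ∀ᶠ h : ℝ in f, h ≠ 0 ∧ |h| < h₀ := by
    refine Filter.Eventually.and (hf self_mem_nhdsWithin) (hf0 ?_)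
    have : ∀ᶠ h : ℝ in 𝓝 0, |h| < h₀ := by
      have := (continuous_abs (G := ℝ)).tendsto 0
      rw [abs_zero] at this
      exact this.eventually_lt_const hh₀
    exact this
  have cP : ∀ h : ℝ, h ≠ 0 → Continuous (fun s : ℝ => h / (s ^ 2 + h ^ 2)) := by
    intro h h0
    have : ∀ s : ℝ, s ^ 2 + h ^ 2 ≠ 0 := fun s => by positivity
    fun_prop (disch := simp [this])
  have ae0 : ∀ᵐ s : ℝ, s ≠ 0 := by simp [ae_iff]
  have hB : Tendsto (fun h => ∫ s in (-D.l)..D.l, D.B h s) f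
      (𝓝 (∫ s in (-D.l)..D.l, (D.R 0 s).re)) := by
    refine intervalIntegral.tendsto_integral_filter_of_dominated_convergence (fun _ => M) ?_ ?_ ?_ ?_
    · filter_upwards [hsm] with h hh
      refine D.meas_of (fun s hs h0 => ?_)
      exact (re_cont (D.R_contAt h s (D.z_ne hm hlow h hh.2 s hs (Or.inl hh.1)))).add
        (((cP h hh.1).const_mul D.al).continuousAt)
    · filter_upwards [hsm] with h hh
      filter_upwards [ae0] with s h0 hs
      rw [Set.uIoc_of_le hl] at hs
      exact (hM h hh.2 s ⟨hs.1.le, hs.2⟩).2 h0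
    · exact intervalIntegrable_const
    · filter_upwards [ae0] with s h0 hs
      rw [Set.uIoc_of_le hl] at hs
      have hz := D.z0_ne s ⟨hs.1.le, hs.2⟩ h0
      rw [← D.B0]
      have : ContinuousAt (fun h => D.B h s) 0 := by
        have hr : ContinuousAt (fun w : ℝ => (w : ℂ)) 0 := Complex.continuous_ofReal.continuousAt
        have c1 : ContinuousAt (fun h => D.z h s) 0 := by unfold z; fun_prop
        have c2 : ContinuousAt (fun h => D.c h s) 0 := by unfold c; fun_prop
        have c3 : ContinuousAt (fun h => D.R h s) 0 := by
          unfold R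
          exact (continuousAt_const.sub (continuousAt_const.mul c2)).div c1 hz
        have c4 : ContinuousAt (fun h : ℝ => D.al * (h / (s ^ 2 + h ^ 2))) 0 := by
          fun_prop (disch := simp [h0])
        exact (re_cont c3).add c4
      exact this.tendsto.mono_left hf0
  have h2 := hB.sub ((hb.const_mul 2).const_mul D.al)
  rw [D.int_0]
  refine h2.congr' ?_
  filter_upwards [hsm] with h hh
  have hz := fun s hs => D.z_ne hm hlow h hh.2 s hs (Or.inl hh.1)
  rw [D.int_h h hz, ← poisson _ _ hh.1, ← intervalIntegral.integral_const_mul]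
  unfold B
  rw [intervalIntegral.integral_add]
  · ring
  · apply ContinuousOn.intervalIntegrable
    intro s hs
    rw [Set.uIcc_of_le hl] at hs
    exact (re_cont (D.R_contAt h s (hz s hs))).continuousWithinAt
  · exact ((cP h hh.1).const_mul D.al).intervalIntegrable _ _

lemma lim_right : Tendsto (fun h => ∫ s in (-D.l)..D.l, (D.Q h s).re) (𝓝[>] 0)
      (𝓝 ((∫ s in (-D.l)..D.l, (D.Q 0 s).re) - D.al * π)) := by
  have h1 : Tendsto (fun h : ℝ => arctan (D.l / h)) (𝓝[>] 0) (𝓝 (π / 2)) := by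
    have : Tendsto (fun h : ℝ => D.l / h) (𝓝[>] 0) atTop :=
      tendsto_inv_nhdsGT_zero.const_mul_atTop D.hl
    exact (tendsto_nhds_of_tendsto_nhdsWithin tendsto_arctan_atTop).comp this
  have := D.lim_Q (𝓝[>] 0) (nhdsWithin_mono 0 (fun x hx => ne_of_gt hx)) _ h1
  convert this using 3
  ring

lemma lim_left : Tendsto (fun h => ∫ s in (-D.l)..D.l, (D.Q h s).re) (𝓝[<] 0)
      (𝓝 ((∫ s in (-D.l)..D.l, (D.Q 0 s).re) + D.al * π)) := by
  have h1 : Tendsto (fun h : ℝ => arctan (D.l / h)) (𝓝[<] 0) (𝓝 (-(π / 2))) := by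
    have : Tendsto (fun h : ℝ => D.l / h) (𝓝[<] 0) atBot :=
      tendsto_inv_nhdsLT_zero.const_mul_atBot D.hl
    exact (tendsto_nhds_of_tendsto_nhdsWithin tendsto_arctan_atBot).comp this
  have := D.lim_Q (𝓝[<] 0) (nhdsWithin_mono 0 (fun x hx => ne_of_lt hx)) _ h1
  convert this using 3
  ring

end Dt
end

section
open ComplexConjugate Asymptotics

lemma cx_clm (p : ℝ × ℝ) : cx p = Complex.equivRealProdCLM.symm p := by
  rfl

lemma cx_add (p q : ℝ × ℝ) : cx (p + q) = cx p + cx q := by simp [cx_clm]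
lemma cx_sub (p q : ℝ × ℝ) : cx (p - q) = cx p - cx q := by simp [cx_clm]
lemma cx_smul (r : ℝ) (p : ℝ × ℝ) : cx (r • p) = r * cx p := by simp [cx_clm]
lemma cx_inj {p q : ℝ × ℝ} (h : cx p = cx q) : p = q := by
  simpa [cx_clm] using h

lemma hasDerivAt_cx {f : ℝ → ℝ × ℝ} {f' : ℝ × ℝ} {s : ℝ} (h : HasDerivAt f f' s) :
    HasDerivAt (fun s => cx (f s)) (cx f') s := by
  exact (Complex.equivRealProdCLM.symm.toContinuousLinearMap.hasFDerivAt (x := f s)).comp_hasDerivAt s h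

lemma hasDerivAt_shift {E : Type*} [NormedAddCommGroup E] [NormedSpace ℝ E] {f : ℝ → E} {f' : E}
    (t s : ℝ) (h : HasDerivAt f f' (t + s)) :
    HasDerivAt (fun s => f (t + s)) f' s := HasDerivAt.comp_const_add t s h

lemma per_deriv {E : Type*} [NormedAddCommGroup E] [NormedSpace ℝ E] {f : ℝ → E} {L : ℝ}
    (h : ∀ s, f (s + L) = f s) (s : ℝ) : deriv f (s + L) = deriv f s := by
  rw [← deriv_comp_add_const]
  congr 1
  exact funext h

lemma smooth_deriv {E : Type*} [NormedAddCommGroup E] [NormedSpace ℝ E] {f : ℝ → E}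
    (h : ContDiff ℝ (⊤ : ℕ∞) f) : ContDiff ℝ (⊤ : ℕ∞) (deriv f) := by
  exact (contDiff_infty_iff_deriv.1 h).2

lemma smooth_has {E : Type*} [NormedAddCommGroup E] [NormedSpace ℝ E] {f : ℝ → E}
    (h : ContDiff ℝ (⊤ : ℕ∞) f) (s : ℝ) : HasDerivAt f (deriv f s) s :=
  ((contDiff_infty_iff_deriv.1 h).1 s).hasDerivAt

lemma smooth_curv {γ : ℝ → ℝ × ℝ} (h : ContDiff ℝ (⊤ : ℕ∞) γ) : ContDiff ℝ (⊤ : ℕ∞) (curv γ) := by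
  have h1 := smooth_deriv h
  have h2 := smooth_deriv h1
  unfold curv dot2 nor
  have a := h1.fst
  have b := h1.snd
  have c := h2.fst
  have d := h2.snd
  exact ((c.mul b).add (d.mul a.neg)).neg

lemma cx_dd {γ : ℝ → ℝ × ℝ} (h : ContDiff ℝ (⊤ : ℕ∞) γ)
    (harc : ∀ s, dot2 (deriv γ s) (deriv γ s) = 1) (s : ℝ) :
    cx (deriv (deriv γ) s) = Complex.I * curv γ s * cx (deriv γ s) := by
  have h1 := smooth_has (smooth_deriv h) s
  have ha : HasDerivAt (fun s => (deriv γ s).1) (deriv (deriv γ) s).1 s :=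
    ((ContinuousLinearMap.fst ℝ ℝ ℝ).hasFDerivAt (x := deriv γ s)).comp_hasDerivAt s h1
  have hb : HasDerivAt (fun s => (deriv γ s).2) (deriv (deriv γ) s).2 s :=
    ((ContinuousLinearMap.snd ℝ ℝ ℝ).hasFDerivAt (x := deriv γ s)).comp_hasDerivAt s h1
  have h2 := (ha.mul ha).add (hb.mul hb)
  have h3 : ((fun s => (deriv γ s).1) * (fun s => (deriv γ s).1)
      + (fun s => (deriv γ s).2) * fun s => (deriv γ s).2) = fun _ => (1:ℝ) := funext harc
  rw [h3] at h2
  have h4 := h2.unique (hasDerivAt_const s (1:ℝ))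
  have h5 := harc s
  unfold dot2 at h5
  apply Complex.ext
  · simp [cx, curv, dot2, nor]
    linear_combination (-(deriv (deriv γ) s).1) * h5 + (deriv γ s).1 / 2 * h4
  · simp [cx, curv, dot2, nor]
    linear_combination (-(deriv (deriv γ) s).2) * h5 + (deriv γ s).2 / 2 * h4

lemma inj_per {γ : ℝ → ℝ × ℝ} {L : ℝ} (hL : 0 < L) (hper : ∀ s, γ (s + L) = γ s)
    (hinj : Set.InjOn γ (Set.Ico 0 L)) {a b : ℝ} (h : γ a = γ b) : ∃ n : ℤ, a - b = n * L := by
  have hp : Function.Periodic γ L := hper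
  have e : ∀ a, γ (toIcoMod hL 0 a) = γ a := fun a => by
    rw [toIcoMod]; exact hp.sub_zsmul_eq _
  have m : ∀ a, toIcoMod hL 0 a ∈ Set.Ico 0 L := fun a => by simpa using toIcoMod_mem_Ico hL 0 a
  have h1 := hinj (m a) (m b) (by rw [e, e, h])
  refine ⟨toIcoDiv hL 0 a - toIcoDiv hL 0 b, ?_⟩
  unfold toIcoMod at h1
  simp only [zsmul_eq_mul] at h1
  push_cast
  linarith

/-- The centred data attached to the curve, the density and the base point `t`. -/
def mkD (L : ℝ) (hL : 0 < L) (γ : ℝ → ℝ × ℝ)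
    (hγ : ContDiff ℝ (⊤ : ℕ∞) γ)
    (hper : ∀ s, γ (s + L) = γ s)
    (hinj : Set.InjOn γ (Set.Ico 0 L))
    (harc : ∀ s, dot2 (deriv γ s) (deriv γ s) = 1)
    (ν α₂ α₃ : ℝ)
    (hα₂ : α₂ * (3 - ν) = (ν - 1) * (7 + ν))
    (hα₃ : α₃ * (1 + ν) = (1 - ν) * (3 + ν))
    (σ : ℝ → ℝ) (hσ : ContDiff ℝ (⊤ : ℕ∞) σ) (hσper : ∀ s, σ (s + L) = σ s)
    (t : ℝ) : Dt where
  l := L / 2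
  ν := ν
  α₂ := α₂
  α₃ := α₃
  g := fun s => conj (cx (deriv γ t)) * (cx (γ (t + s)) - cx (γ t))
  u := fun s => conj (cx (deriv γ t)) * cx (deriv γ (t + s))
  κ := fun s => curv γ (t + s)
  κ1 := fun s => deriv (curv γ) (t + s)
  κ2 := fun s => deriv (deriv (curv γ)) (t + s)
  σ := fun s => σ (t + s)
  σ1 := fun s => deriv σ (t + s)
  σ2 := fun s => deriv (deriv σ) (t + s)
  σ3 := fun s => deriv (deriv (deriv σ)) (t + s)
  hl := by linarith
  hα₂ := hα₂
  hα₃ := hα₃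
  hg := fun s => ((hasDerivAt_shift (f := fun s => cx (γ s)) t s
    (hasDerivAt_cx (smooth_has hγ (t + s)))).sub_const _).const_mul _
  hu := fun s => by
    have := (hasDerivAt_shift (f := fun s => cx (deriv γ s)) t s
      (hasDerivAt_cx (smooth_has (smooth_deriv hγ) (t + s)))).const_mul (conj (cx (deriv γ t)))
    refine this.congr_deriv ?_
    rw [cx_dd hγ harc]
    ring
  hκ := fun s => hasDerivAt_shift t s (smooth_has (smooth_curv hγ) _)
  hκ1 := fun s => hasDerivAt_shift t s (smooth_has (smooth_deriv (smooth_curv hγ)) _)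
  hκ2 := (smooth_deriv (smooth_deriv (smooth_curv hγ))).continuous.comp (continuous_const.add continuous_id)
  hσ := fun s => hasDerivAt_shift t s (smooth_has hσ _)
  hσ1 := fun s => hasDerivAt_shift t s (smooth_has (smooth_deriv hσ) _)
  hσ2 := fun s => hasDerivAt_shift t s (smooth_has (smooth_deriv (smooth_deriv hσ)) _)
  hσ3 := (smooth_deriv (smooth_deriv (smooth_deriv hσ))).continuous.comp (continuous_const.add continuous_id)
  g0 := by simp
  u0 := by
    simp only [add_zero]
    rw [mul_comm]; exact cx_mul_conj _ (harc t)
  hn := fun s => by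
    have h1 := cx_mul_conj _ (harc t)
    have h2 := cx_mul_conj _ (harc (t + s))
    simp only [map_mul, Complex.conj_conj]
    linear_combination (cx (deriv γ (t + s)) * conj (cx (deriv γ (t + s)))) * h1 + h2
  nz := by
    intro s hs h0 hg
    have h1 := cx_mul_conj _ (harc t)
    have h2 : conj (cx (deriv γ t)) ≠ 0 := right_ne_zero_of_mul (h1 ▸ one_ne_zero)
    have h3 := (mul_eq_zero.1 hg).resolve_left h2
    obtain ⟨n, hn⟩ := inj_per hL hper hinj (cx_inj (sub_eq_zero.1 h3))
    have hsn : s = n * L := by linarith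
    have h4 : |(n:ℝ)| < 1 := by
      have : |s| ≤ L / 2 := abs_le.2 ⟨by linarith [hs.1], hs.2⟩
      rw [hsn, abs_mul, abs_of_pos hL] at this
      by_contra hc
      push Not at hc
      nlinarith
    have h5 : n = 0 := by
      have : |n| < 1 := by exact_mod_cast h4
      exact Int.abs_lt_one_iff.1 this
    apply h0
    rw [hsn, h5]; simp
  pg := by
    have := hper (t + -(L / 2))
    rw [show t + -(L/2) + L = t + L / 2 by ring] at this
    simp only [this]
  pu := by
    have := per_deriv hper (t + -(L / 2))
    rw [show t + -(L/2) + L = t + L / 2 by ring] at this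
    simp only [this]
  pκ := by
    have h1 : ∀ s, curv γ (s + L) = curv γ s := fun s => by
      simp only [curv, nor, per_deriv hper, per_deriv (per_deriv hper)]
    have := h1 (t + -(L / 2))
    rw [show t + -(L/2) + L = t + L / 2 by ring] at this
    simp only [this]
  pκ1 := by
    have h1 : ∀ s, curv γ (s + L) = curv γ s := fun s => by
      simp only [curv, nor, per_deriv hper, per_deriv (per_deriv hper)]
    have := per_deriv h1 (t + -(L / 2))
    rw [show t + -(L/2) + L = t + L / 2 by ring] at this
    simp only [this]
  pσ := by
    have := hσper (t + -(L / 2))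
    rw [show t + -(L/2) + L = t + L / 2 by ring] at this
    simp only [this]
  pσ1 := by
    have := per_deriv hσper (t + -(L / 2))
    rw [show t + -(L/2) + L = t + L / 2 by ring] at this
    simp only [this]
  pσ2 := by
    have := per_deriv (per_deriv hσper) (t + -(L / 2))
    rw [show t + -(L/2) + L = t + L / 2 by ring] at this
    simp only [this]

end

theorem stmt18 (L : ℝ) (hL : 0 < L) (γ : ℝ → ℝ × ℝ)
    (hγ : ContDiff ℝ (⊤ : ℕ∞) γ)
    (hper : ∀ s, γ (s + L) = γ s)
    (hinj : Set.InjOn γ (Set.Ico 0 L))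
    (harc : ∀ s, dot2 (deriv γ s) (deriv γ s) = 1)
    (ν : ℝ) (hν3 : ν ≠ 3) (hν1 : ν ≠ -1)
    (α₁ α₂ α₃ c₀ : ℝ) (hα₁ : α₁ = 2 - ν)
    (hα₂ : α₂ = (ν - 1) * (7 + ν) / (3 - ν))
    (hα₃ : α₃ = (1 - ν) * (3 + ν) / (1 + ν))
    (hc₀ : c₀ = (ν - 1) * (ν + 3) * (2 * ν - 1) / (2 * (3 - ν)))
    (σ : ℝ → ℝ) (hσ : ContDiff ℝ (⊤ : ℕ∞) σ) (hσper : ∀ s, σ (s + L) = σ s)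
    (t : ℝ) :
    ∃ h₀ > (0 : ℝ),
      (∀ h : ℝ, 0 < |h| → |h| < h₀ → ∀ s : ℝ, γ t + h • nor γ t ≠ γ s) ∧
      (∃ M : ℝ, ∀ s ∈ Set.Icc (0 : ℝ) L,
        |suppKer γ ν α₁ α₂ α₃ t (γ t) s * σ s| ≤ M) ∧
      Tendsto
        (fun h : ℝ =>
          ∫ s in (0 : ℝ)..L, suppKer γ ν α₁ α₂ α₃ t (γ t + h • nor γ t) s * σ s)
        (𝓝[>] (0 : ℝ))
        (𝓝 (c₀ * (curv γ t) ^ 2 * σ t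
          + ∫ s in (0 : ℝ)..L, suppKer γ ν α₁ α₂ α₃ t (γ t) s * σ s)) ∧
      Tendsto
        (fun h : ℝ =>
          ∫ s in (0 : ℝ)..L, suppKer γ ν α₁ α₂ α₃ t (γ t + h • nor γ t) s * σ s)
        (𝓝[<] (0 : ℝ))
        (𝓝 (-(c₀ * (curv γ t) ^ 2 * σ t)
          + ∫ s in (0 : ℝ)..L, suppKer γ ν α₁ α₂ α₃ t (γ t) s * σ s)) := by
  have h3 : 3 - ν ≠ 0 := fun h => hν3 (by linarith)
  have h1 : 1 + ν ≠ 0 := fun h => hν1 (by linarith)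
  have e2 : α₂ * (3 - ν) = (ν - 1) * (7 + ν) := by rw [hα₂]; field_simp
  have e3 : α₃ * (1 + ν) = (1 - ν) * (3 + ν) := by rw [hα₃]; field_simp
  subst hα₁
  obtain ⟨D, hD⟩ : ∃ D, D = mkD L hL γ hγ hper hinj harc ν α₂ α₃ e2 e3 σ hσ hσper t := ⟨_, rfl⟩
  have hl : D.l = L / 2 := by rw [hD]; rfl
  have hTT := cx_mul_conj _ (harc t)
  have hT0 : (starRingEnd ℂ) (cx (deriv γ t)) ≠ 0 := right_ne_zero_of_mul (hTT ▸ one_ne_zero)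
  have hz : ∀ h s, (starRingEnd ℂ) (cx (deriv γ t)) * cx (γ t + h • nor γ t - γ (t + s)) = D.z h s := by
    intro h s
    rw [hD]
    simp only [Dt.z, mkD, cx_sub, cx_add, cx_smul, cx_nor]
    linear_combination (-Complex.I * h) * hTT
  have hne : ∀ h s, D.z h s ≠ 0 → γ t + h • nor γ t ≠ γ (t + s) := by
    intro h s h0 he
    apply h0
    rw [← hz, he]
    simp [cx_clm]
  have hK : ∀ h s, D.z h s ≠ 0 →
      suppKer γ ν (2 - ν) α₂ α₃ t (γ t + h • nor γ t) (t + s) * σ (t + s)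
        = -(1 / (8 * π)) * (D.Q h s).re := by
    intro h s h0
    rw [suppKer_eq γ ν α₂ α₃ t _ _ harc (hne h s h0), hz, ← D.c_conj, Dt.Q, hD,
      Complex.re_mul_ofReal, ← mul_assoc]
    rfl
  have hcper : ∀ s, curv γ (s + L) = curv γ s := fun s => by
    simp only [curv, nor, per_deriv hper, per_deriv (per_deriv hper)]
  have hfper : ∀ h : ℝ, Function.Periodic
      (fun s => suppKer γ ν (2 - ν) α₂ α₃ t (γ t + h • nor γ t) s * σ s) L := by
    intro h s
    simp only [suppKer, tang, nor, hper, hσper, per_deriv hper, hcper, per_deriv hcper]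
  have hint : ∀ h : ℝ, ∫ s in (0 : ℝ)..L, suppKer γ ν (2 - ν) α₂ α₃ t (γ t + h • nor γ t) s * σ s
      = ∫ s in (-D.l)..D.l,
        suppKer γ ν (2 - ν) α₂ α₃ t (γ t + h • nor γ t) (t + s) * σ (t + s) := by
    intro h
    have a := (hfper h).intervalIntegral_add_eq 0 (t + -D.l)
    rw [zero_add, show t + -D.l + L = t + D.l by rw [hl]; ring] at a
    rw [a]
    exact (intervalIntegral.integral_comp_add_left
      (fun s => suppKer γ ν (2 - ν) α₂ α₃ t (γ t + h • nor γ t) s * σ s) t).symm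
  have hll : -D.l ≤ D.l := by linarith [D.hl]
  have hred : ∀ s : ℝ, ∃ r ∈ Set.Icc (-D.l) D.l, ∃ n : ℤ, s = t + r + n * L := by
    intro s
    have hm := toIcoMod_mem_Ico hL (-D.l) (s - t)
    refine ⟨toIcoMod hL (-D.l) (s - t), ⟨hm.1, ?_⟩, toIcoDiv hL (-D.l) (s - t), ?_⟩
    · have := hm.2
      rw [hl] at this ⊢
      linarith
    · rw [toIcoMod, zsmul_eq_mul]; ring
  obtain ⟨m, hm, h₀, hh₀, hlow⟩ := D.lower
  have hint0 : ∫ s in (0 : ℝ)..L, suppKer γ ν (2 - ν) α₂ α₃ t (γ t) s * σ s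
      = -(1 / (8 * π)) * ∫ s in (-D.l)..D.l, (D.Q 0 s).re := by
    have a := hint 0
    rw [zero_smul, add_zero] at a
    rw [a, ← intervalIntegral.integral_const_mul]
    apply intervalIntegral.integral_congr_ae
    have : ∀ᵐ s : ℝ, s ≠ 0 := by simp [ae_iff]
    filter_upwards [this] with s h0 hs
    rw [Set.uIoc_of_le hll] at hs
    have b := hK 0 s (D.z0_ne s ⟨hs.1.le, hs.2⟩ h0)
    rwa [zero_smul, add_zero] at b
  have hinth : ∀ h : ℝ, h ≠ 0 → |h| < h₀ →
      ∫ s in (0 : ℝ)..L, suppKer γ ν (2 - ν) α₂ α₃ t (γ t + h • nor γ t) s * σ s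
      = -(1 / (8 * π)) * ∫ s in (-D.l)..D.l, (D.Q h s).re := by
    intro h h0 hh
    rw [hint h, ← intervalIntegral.integral_const_mul]
    apply intervalIntegral.integral_congr
    intro s hs
    rw [Set.uIcc_of_le hll] at hs
    exact hK h s (D.z_ne hm hlow h hh s hs (Or.inl h0))
  have hal : c₀ * (curv γ t) ^ 2 * σ t = (1 / (8 * π)) * (D.al * π) := by
    have hal' : D.al = (4 * (1 - ν) * (1 + ν) + 4 * ν * α₂) * curv γ t ^ 2 * σ t := by
      rw [hD]
      simp [Dt.al, mkD]
    rw [hal', hc₀, hα₂]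
    have := Real.pi_ne_zero
    field_simp
    ring
  have hev : ∀ᶠ h : ℝ in 𝓝 0, |h| < h₀ := by
    have := (continuous_abs (G := ℝ)).tendsto 0
    rw [abs_zero] at this
    exact this.eventually_lt_const hh₀
  refine ⟨h₀, hh₀, ?_, ?_, ?_, ?_⟩
  · intro h h0 hh s
    obtain ⟨r, hr, n, rfl⟩ := hred s
    have : γ (t + r + n * L) = γ (t + r) := by
      have hp : Function.Periodic γ L := hper
      exact hp.int_mul n (t + r)
    rw [this]
    exact hne h r (D.z_ne hm hlow h hh r hr (Or.inl (abs_pos.1 h0)))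
  · obtain ⟨M, hM⟩ := D.Q_bdd
    refine ⟨max |suppKer γ ν (2 - ν) α₂ α₃ t (γ t) t * σ t| (1 / (8 * π) * M), fun s _ => ?_⟩
    obtain ⟨r, hr, n, rfl⟩ := hred s
    have a := (hfper 0).int_mul n (t + r)
    simp only [zero_smul, add_zero] at a
    rw [a]
    by_cases hr0 : r = 0
    · subst hr0
      rw [add_zero]
      exact le_max_left _ _
    · refine le_trans ?_ (le_max_right _ _)
      have b := hK 0 r (D.z0_ne r hr hr0)
      rw [zero_smul, add_zero] at b
      rw [b, abs_mul, abs_neg, abs_of_pos (by positivity)]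
      exact mul_le_mul_of_nonneg_left (hM r hr hr0) (by positivity)
  · rw [hint0, hal]
    have a := D.lim_right.const_mul (-(1 / (8 * π)))
    rw [show (1 / (8 * π)) * (D.al * π) + -(1 / (8 * π)) * ∫ s in (-D.l)..D.l, (D.Q 0 s).re
      = -(1 / (8 * π)) * ((∫ s in (-D.l)..D.l, (D.Q 0 s).re) - D.al * π) by ring]
    refine a.congr' ?_
    filter_upwards [nhdsWithin_le_nhds hev, self_mem_nhdsWithin] with h hh h0
    exact (hinth h (ne_of_gt h0) hh).symm
  · rw [hint0, hal]
    have a := D.lim_left.const_mul (-(1 / (8 * π)))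
    rw [show -((1 / (8 * π)) * (D.al * π)) + -(1 / (8 * π)) * ∫ s in (-D.l)..D.l, (D.Q 0 s).re
      = -(1 / (8 * π)) * ((∫ s in (-D.l)..D.l, (D.Q 0 s).re) + D.al * π) by ring]
    refine a.congr' ?_
    filter_upwards [nhdsWithin_le_nhds hev, self_mem_nhdsWithin] with h hh h0
    exact (hinth h (ne_of_lt h0) hh).symm
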